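/- Let K and L be convex bodies in ℝ³ (compact convex sets with nonempty interior), both centrally symmetric about the origin O, with L contained in the interior of K and L strictly convex. Suppose that for every point x on the boundary of K, the graze Σ(L,x) is contained in a plane Δ_x, and that K is almost free with respect to L. Then L is an ellipsoid, i.e., the image of the closed Euclidean unit ball under an invertible affine transformation of ℝ³. -/

import Mathlib

open Metric Set

noncomputable section

/-- The ambient space ℝ³. -/
abbrev E3 := EuclideanSpace ℝ (Fin 3)

/-- The cone generated by `L` with apex `x`:
`C(L,x) = {x + λ (y - x) : y ∈ L, λ ≥ 0}`. -/
def coneGen (L : Set E3) (x : E3) : Set E3 :=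
  {p | ∃ y ∈ L, ∃ l : ℝ, 0 ≤ l ∧ p = x + l • (y - x)}

/-- The support cone `S(L,x)` of `L` from `x`, the boundary of `C(L,x)`. -/
def suppCone (L : Set E3) (x : E3) : Set E3 := frontier (coneGen L x)

/-- The graze `Σ(L,x) = S(L,x) ∩ bd L`. -/
def graze (L : Set E3) (x : E3) : Set E3 := suppCone L x ∩ frontier L

/-- An affine subspace of `ℝ³` is a plane if its direction is 2-dimensional. -/
def IsPlane (P : AffineSubspace ℝ E3) : Prop :=
  Module.finrank ℝ P.direction = 2

/-- The line through two points. -/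
def lineThrough (a b : E3) : Set E3 := ↑(affineSpan ℝ ({a, b} : Set E3))

/-- `K` is almost free with respect to `L` (given the planes `Δ z` containing the
grazes `Σ(L,z)` for `z ∈ bd K`): for every `z ∈ bd K` and every
`w ∈ Π_z ∩ bd K`, where `Π_z` is the plane through the origin parallel to `Δ z`,
the line through `z` and `w` does not meet `L`. -/
def AlmostFree (K L : Set E3) (Δ : E3 → AffineSubspace ℝ E3) : Prop :=
  ∀ z ∈ frontier K, ∀ w ∈ (↑(Δ z).direction : Set E3) ∩ frontier K,
    Disjoint (lineThrough z w) L

/-!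
Let `p y` be the point of `L` with outer normal `y ≠ 0`, and say that `y` and `z ∉ L` are in contact
if `z` lies on the supporting plane at `p y`. The graze from `z` consists of the `p y` with `y` in
contact with `z`. If it is planar, then `⟪a z, z - p y⟫ = 1` for all these `y` and a single vector
`a z`.

First, `L` is smooth: if a normal cone contained two independent normals, contacts in the plane of
a graze could be moved off the corresponding boundary point in directions that an edge of the cone
forbids. Next, blow up the second-order remainder of the support function at `y`. Planarity
survives in the limit: for each `z ∈ frontier K` on the supporting plane, the limit has, along the
lines orthogonal to `z - p y` in the plane orthogonal to `y`, common subgradients in the direction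
of `a z`. This forces the limit to be a quadratic form. Where `L` is touched from inside by a ball
the form is nondegenerate in all directions orthogonal to `y`, and since such points are dense, a
limit argument gives in every supporting plane a definite form for which `z - p y` and the trace of
`⟪a z, ·⟫ = 0` are conjugate.

In homogeneous coordinates on `ℝ³ × ℝ`, where a supporting plane is a hyperplane, these forms are
compatible. Two nearby supporting planes meet in a line that meets `frontier K` in two points `z`
and `w`, and the numbers `⟪a z, w - z⟫` and `⟪a w, z - w⟫` determine both forms on that line up to a
factor. Forms on hyperplanes that agree in this way are, up to factors, restrictions of a single
form `B`: locally by linear algebra, and globally because the sphere of normals is connected. Each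
`p y` is isotropic for `B` and `B` is positive definite on a supporting plane, so the boundary of
`L` lies on an ellipsoid.
-/

open scoped RealInnerProductSpace Topology
open Filter

section SupportMap

variable {E : Type*} [NormedAddCommGroup E] [InnerProductSpace ℝ E]

lemma exists_mem_inner_lt_of_mem_interior {S : Set E} {x y : E} (hx : x ∈ interior S)
    (hy : y ≠ 0) : ∃ x' ∈ S, ⟪y, x⟫ < ⟪y, x'⟫ := by
  have hline : Tendsto (fun t : ℝ => x + t • y) (𝓝[>] 0) (𝓝 x) := by
    have h : Continuous fun t : ℝ => x + t • y := by fun_prop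
    simpa using (h.tendsto 0).mono_left nhdsWithin_le_nhds
  obtain ⟨t, htS, ht⟩ :=
    ((hline.eventually (mem_interior_iff_mem_nhds.1 hx)).and self_mem_nhdsWithin).exists
  refine ⟨_, htS, ?_⟩
  rw [inner_add_right, inner_smul_right]
  exact lt_add_of_pos_right _ (mul_pos ht (real_inner_self_pos.2 hy))

/-- `p` is the support map of the strictly convex set `L`: for every direction `y ≠ 0`, the point
`p y` is the unique point of `L` at which the functional `⟪y, ·⟫` is maximal. Thus `y` is an outer
normal of `L` at `p y`, the support function of `L` is `⟪y, p y⟫`, and for `y ≠ 0` the equation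
`⟪y, z - p y⟫ = 0` says that `z` lies on the support plane of `L` with outer normal `y`. -/
structure IsSupportMap (L : Set E) (p : E → E) : Prop where
  mem : ∀ y, p y ∈ L
  inner_le : ∀ y, ∀ x ∈ L, ⟪y, x⟫ ≤ ⟪y, p y⟫
  eq_of_inner_le : ∀ y ≠ 0, ∀ x ∈ L, ⟪y, p y⟫ ≤ ⟪y, x⟫ → x = p y

lemma exists_isSupportMap {L : Set E} (hLc : IsCompact L) (hLs : StrictConvex ℝ L)
    (hLi : (interior L).Nonempty) : ∃ p : E → E, IsSupportMap L p := by
  have hmax : ∀ y : E, ∃ x ∈ L, ∀ x' ∈ L, ⟪y, x'⟫ ≤ ⟪y, x⟫ := fun y =>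
    hLc.exists_isMaxOn (hLi.mono interior_subset) (f := fun x => ⟪y, x⟫) (by fun_prop)
  choose p hp hmax using hmax
  refine ⟨p, hp, hmax, fun y hy x hx hle => ?_⟩
  refine hLs.eq hx (hp y) (a := 1 / 2) (b := 1 / 2) (by norm_num) (by norm_num) (by norm_num)
    fun hint => ?_
  obtain ⟨x', hx', hlt⟩ := exists_mem_inner_lt_of_mem_interior hint hy
  have := hmax y x' hx'
  simp only [inner_add_right, inner_smul_right] at hlt
  linarith

namespace IsSupportMap

variable {L : Set E} {p : E → E} (hp : IsSupportMap L p)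
include hp

lemma inner_sub_nonneg (y : E) {x : E} (hx : x ∈ L) : 0 ≤ ⟪y, p y - x⟫ := by
  rw [inner_sub_right]
  exact sub_nonneg.2 (hp.inner_le y x hx)

lemma inner_apply_sub_apply_nonneg (y y' : E) : 0 ≤ ⟪y, p y - p y'⟫ :=
  hp.inner_sub_nonneg y (hp.mem y')

lemma inner_sub_pos {x y : E} (hx : x ∈ interior L) (hy : y ≠ 0) : 0 < ⟪y, p y - x⟫ := by
  obtain ⟨x', hx', hlt⟩ := exists_mem_inner_lt_of_mem_interior hx hy
  rw [inner_sub_right]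
  exact sub_pos.2 (hlt.trans_le (hp.inner_le y x' hx'))

lemma apply_smul {t : ℝ} (ht : 0 < t) {y : E} (hy : y ≠ 0) : p (t • y) = p y := by
  refine hp.eq_of_inner_le y hy _ (hp.mem _) ?_
  have := hp.inner_le (t • y) (p y) (hp.mem y)
  rw [real_inner_smul_left, real_inner_smul_left] at this
  exact le_of_mul_le_mul_left this ht

lemma apply_mem_frontier {y : E} (hy : y ≠ 0) : p y ∈ frontier L := by
  refine ⟨subset_closure (hp.mem y), fun hint => ?_⟩
  simpa using hp.inner_sub_pos hint hy

lemma continuous_inner_apply (hL : Bornology.IsBounded L) :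
    Continuous fun y => ⟪y, p y⟫ := by
  obtain ⟨B, hB⟩ := hL.exists_norm_le
  have hB0 : 0 ≤ B := (norm_nonneg _).trans (hB _ (hp.mem 0))
  have key (y y' : E) : ⟪y, p y⟫ ≤ ⟪y', p y'⟫ + B * dist y y' := by
    have h1 := hp.inner_le y' _ (hp.mem y)
    have h2 := real_inner_le_norm (y - y') (p y)
    rw [inner_sub_left, ← dist_eq_norm] at h2
    nlinarith [hB _ (hp.mem y), dist_nonneg (x := y) (y := y')]
  exact (LipschitzWith.of_le_add_mul B.toNNReal fun y y' => by
    rw [Real.coe_toNNReal _ hB0]; exact key y y').continuous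

lemma continuousAt (hL : IsCompact L) {y : E} (hy : y ≠ 0) : ContinuousAt p y := by
  rw [ContinuousAt, tendsto_iff_ultrafilter]
  intro U hU
  obtain ⟨x, hx, hlim⟩ := hL.ultrafilter_le_nhds' (U.map p)
    (Filter.mem_map.2 (univ_mem' hp.mem))
  replace hlim : Tendsto p U (𝓝 x) := hlim
  have hinner : ⟪y, x⟫ = ⟪y, p y⟫ := tendsto_nhds_unique (Tendsto.inner (f := id) hU hlim)
    (((hp.continuous_inner_apply hL.isBounded).tendsto y).comp hU)
  rwa [← hp.eq_of_inner_le y hy x hx hinner.ge]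

lemma tendsto (hL : IsCompact L) {ι : Type*} {l : Filter ι} {Y : ι → E} {y : E} (hy : y ≠ 0)
    (hY : Tendsto Y l (𝓝 y)) : Tendsto (fun i => p (Y i)) l (𝓝 (p y)) :=
  (hp.continuousAt hL hy).tendsto.comp hY

variable [CompleteSpace E]

lemma exists_inner_sub_pos (hLc : IsClosed L) (hLconv : Convex ℝ L) {z : E} (hz : z ∉ L) :
    ∃ y, 0 < ⟪y, z - p y⟫ := by
  obtain ⟨f, u, hfz, hfL⟩ := geometric_hahn_banach_point_closed hLconv hLc hz
  refine ⟨-(InnerProductSpace.toDual ℝ E).symm f, ?_⟩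
  rw [inner_neg_left, InnerProductSpace.toDual_symm_apply, map_sub]
  linarith [hfL _ (hp.mem (-(InnerProductSpace.toDual ℝ E).symm f))]

lemma exists_norm_eq_one_apply_eq (hLc : IsClosed L) (hLconv : Convex ℝ L)
    (hLi : (interior L).Nonempty) {q : E} (hq : q ∈ frontier L) : ∃ y, ‖y‖ = 1 ∧ p y = q := by
  rw [hLc.frontier_eq] at hq
  obtain ⟨f, hf⟩ := geometric_hahn_banach_open_point hLconv.interior isOpen_interior hq.2
  set y := (InnerProductSpace.toDual ℝ E).symm f
  have hfy (x : E) : f x = ⟪y, x⟫ := InnerProductSpace.toDual_symm_apply.symm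
  have hy : y ≠ 0 := by
    rintro h
    obtain ⟨o, ho⟩ := hLi
    simpa [hfy, h] using hf o ho
  refine ⟨‖y‖⁻¹ • y,
    by rw [norm_smul, norm_inv, norm_norm, inv_mul_cancel₀ (norm_ne_zero_iff.2 hy)],
    ?_⟩
  rw [hp.apply_smul (by positivity) hy, eq_comm]
  refine hp.eq_of_inner_le y hy q hq.1 ?_
  have hle : closure (interior L) ⊆ {x | ⟪y, x⟫ ≤ ⟪y, q⟫} :=
    closure_minimal (fun x hx => by simpa only [hfy, mem_ofPred_eq] using (hf x hx).le)
      (isClosed_le (by fun_prop) (by fun_prop))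
  rw [hLconv.closure_interior_eq_closure_of_nonempty_interior hLi] at hle
  exact hle (subset_closure (hp.mem y))

end IsSupportMap

end SupportMap

section Contact

variable {E : Type*} [NormedAddCommGroup E] [InnerProductSpace ℝ E] {L : Set E} {p : E → E}

lemma exists_tendsto_zero_eventually_eq_zero {ι : Type*} {l : Filter ι} {f : ι → ℝ → ℝ}
    {f₀ : ℝ → ℝ} {ε : ℝ} (hε : 0 < ε) (hf : ∀ i, Continuous (f i))
    (hneg : ∀ s ∈ Ico (-ε) 0, f₀ s < 0) (hpos : ∀ s ∈ Ioc 0 ε, 0 < f₀ s)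
    (hlim : ∀ s, Tendsto (fun x : ι × ℝ => f x.1 x.2) (l ×ˢ 𝓝 s) (𝓝 (f₀ s))) :
    ∃ s : ι → ℝ, Tendsto s l (𝓝 0) ∧ ∀ᶠ i in l, f i (s i) = 0 := by
  have hlim' {F : Filter ι} (hF : F ≤ l) {σ : ι → ℝ} {s : ℝ} (hσ : Tendsto σ F (𝓝 s)) :
      Tendsto (fun i => f i (σ i)) F (𝓝 (f₀ s)) :=
    (hlim s).comp ((tendsto_id.mono_right hF).prodMk hσ)
  have hroot : ∀ᶠ i in l, ∃ s ∈ Icc (-ε) ε, f i s = 0 := by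
    filter_upwards [(hlim' le_rfl tendsto_const_nhds).eventually_lt_const
        (hneg (-ε) ⟨le_rfl, neg_lt_zero.2 hε⟩),
      (hlim' le_rfl tendsto_const_nhds).eventually_const_lt (hpos ε ⟨hε, le_rfl⟩)] with i hi₁ hi₂
    exact intermediate_value_Icc (by linarith) (hf i).continuousOn ⟨hi₁.le, hi₂.le⟩
  choose! s hsmem hs using fun i (h : ∃ s ∈ Icc (-ε) ε, f i s = 0) => h
  refine ⟨s, (tendsto_iff_ultrafilter _ _ _).2 fun U hU => ?_, hroot.mono hs⟩
  obtain ⟨s₀, hs₀, hlim₀⟩ := isCompact_Icc.ultrafilter_le_nhds' (U.map s)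
    (Filter.mem_map.2 (hU (hroot.mono hsmem)))
  have hzero : f₀ s₀ = 0 := tendsto_nhds_unique_of_eventuallyEq (hlim' hU hlim₀)
    tendsto_const_nhds ((hroot.mono hs).filter_mono hU)
  rcases lt_trichotomy s₀ 0 with h | rfl | h
  · exact absurd hzero (hneg s₀ ⟨hs₀.1, h⟩).ne
  · exact hlim₀
  · exact absurd hzero (hpos s₀ ⟨h, hs₀.2⟩).ne'

namespace IsSupportMap

variable (hp : IsSupportMap L p)
include hp

lemma inner_sub_apply_le (y y' z : E) : ⟪y, z - p y⟫ ≤ ⟪y, z - p y'⟫ := by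
  have := hp.inner_apply_sub_apply_nonneg y y'
  rw [← sub_sub_sub_cancel_left (p y') (p y) z, inner_sub_right] at this
  linarith

lemma continuous_inner_sub_apply (hL : IsCompact L) :
    Continuous fun x : E × E => ⟪x.1, x.2 - p x.1⟫ := by
  simp only [inner_sub_right]
  exact (by fun_prop : Continuous fun x : E × E => ⟪x.1, x.2⟫).sub
    ((hp.continuous_inner_apply hL.isBounded).comp continuous_fst)

lemma exists_notMem_span_inner_sub_pos [CompleteSpace E] (hrank : 1 < Module.rank ℝ E)
    (hLc : IsCompact L) (hLconv : Convex ℝ L) {z : E} (hz : z ∉ L) (ν : E) :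
    ∃ y ∉ Submodule.span ℝ {ν}, 0 < ⟪y, z - p y⟫ := by
  by_contra! h
  have hopen : IsOpen {y | 0 < ⟪y, z - p y⟫} := isOpen_lt continuous_const
    ((hp.continuous_inner_sub_apply hLc).comp (.prodMk_left z))
  have hsub : {y | 0 < ⟪y, z - p y⟫} ⊆ Submodule.span ℝ {ν} := fun y hy =>
    not_imp_comm.1 (h y) (not_le.2 hy)
  have htop := Submodule.eq_top_of_nonempty_interior' _
    ((hp.exists_inner_sub_pos hLc.isClosed hLconv hz).imp (interior_maximal hsub hopen))
  refine hrank.not_ge ?_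
  rw [← rank_top, ← htop]
  exact (rank_span_le _).trans_eq (Cardinal.mk_singleton ν)

lemma not_forall_inner_contact_eq_zero [CompleteSpace E] (hrank : 1 < Module.rank ℝ E)
    (hLc : IsCompact L) (hLconv : Convex ℝ L) {z ν : E} (hz : z ∉ L) (hν : ⟪ν, z - p ν⟫ < 0) :
    ¬ ∀ y ≠ 0, ⟪y, z - p y⟫ = 0 → ⟪ν, z - p y⟫ = 0 := by
  intro h
  obtain ⟨y₀, hy₀, hpos⟩ := hp.exists_notMem_span_inner_sub_pos hrank hLc hLconv hz ν
  have hcont : Continuous fun s : ℝ => ⟪y₀ + s • ν, z - p (y₀ + s • ν)⟫ :=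
    (hp.continuous_inner_sub_apply hLc).comp (by fun_prop : Continuous fun s : ℝ => (y₀ + s • ν, z))
  set s₁ : ℝ := |⟪y₀, z - p ν⟫| / -⟪ν, z - p ν⟫
  have hs₁ : 0 ≤ s₁ := div_nonneg (abs_nonneg _) (by linarith)
  have hneg : ⟪y₀ + s₁ • ν, z - p (y₀ + s₁ • ν)⟫ ≤ 0 := by
    have hs₁ν : s₁ * ⟪ν, z - p ν⟫ = -|⟪y₀, z - p ν⟫| := by
      simp only [s₁, div_neg, neg_mul, div_mul_cancel₀ _ hν.ne]
    calc ⟪y₀ + s₁ • ν, z - p (y₀ + s₁ • ν)⟫ ≤ ⟪y₀ + s₁ • ν, z - p ν⟫ :=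
          hp.inner_sub_apply_le _ _ _
      _ = ⟪y₀, z - p ν⟫ - |⟪y₀, z - p ν⟫| := by
          rw [inner_add_left, real_inner_smul_left, hs₁ν, ← sub_eq_add_neg]
      _ ≤ 0 := sub_nonpos.2 (le_abs_self _)
  obtain ⟨s, -, hs⟩ := intermediate_value_Icc' hs₁ hcont.continuousOn
    ⟨hneg, by simpa only [zero_smul, add_zero] using hpos.le⟩
  have hne : y₀ + s • ν ≠ 0 := fun h0 =>
    hy₀ (Submodule.mem_span_singleton.2
      ⟨-s, by rw [neg_smul]; exact (eq_neg_of_add_eq_zero_left h0).symm⟩)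
  have hνs := h _ hne hs
  simp only [inner_add_left, real_inner_smul_left, hνs, mul_zero, add_zero] at hs
  exact (hpos.trans_le (hp.inner_sub_apply_le y₀ (y₀ + s • ν) z)).ne' hs

/-- If the contact vectors `z - p y` were all orthogonal to `ν ≠ 0`, then moving the normal in the
direction `± ν` would not change whether its support plane separates `z` from `L`; but moving it
far enough certainly does. -/
lemma eq_zero_of_forall_inner_contact_eq_zero [CompleteSpace E] (hrank : 1 < Module.rank ℝ E)
    (hLc : IsCompact L) (hLconv : Convex ℝ L) (hLi : (interior L).Nonempty) {z ν : E} (hz : z ∉ L)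
    (h : ∀ y ≠ 0, ⟪y, z - p y⟫ = 0 → ⟪ν, z - p y⟫ = 0) : ν = 0 := by
  by_contra hν
  obtain ⟨o, ho⟩ := hLi
  have hsum : ⟪ν, z - p ν⟫ + ⟪-ν, z - p (-ν)⟫ < 0 := by
    have h1 := hp.inner_sub_pos ho hν
    have h2 := hp.inner_sub_pos ho (neg_ne_zero.2 hν)
    simp only [inner_sub_right, inner_neg_left] at h1 h2 ⊢
    linarith
  rcases lt_or_ge ⟪ν, z - p ν⟫ 0 with hlt | hge
  · exact hp.not_forall_inner_contact_eq_zero hrank hLc hLconv hz hlt h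
  · refine hp.not_forall_inner_contact_eq_zero hrank hLc hLconv hz (ν := -ν) (by linarith)
      fun y hy hyz => ?_
    rw [inner_neg_left, h y hy hyz, neg_zero]

lemma exists_contact_tendsto (hL : IsCompact L) {ι : Type*} {l : Filter ι} {Y Z : ι → E}
    {y z η : E} (hy : y ≠ 0) (hyz : ⟪y, z - p y⟫ = 0) (hη : 0 < ⟪η, z - p y⟫)
    (hY : Tendsto Y l (𝓝 y)) (hZ : Tendsto Z l (𝓝 z)) :
    ∃ s : ι → ℝ, Tendsto s l (𝓝 0) ∧
      ∀ᶠ i in l, ⟪Y i + s i • η, Z i - p (Y i + s i • η)⟫ = 0 := by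
  have hcont := hp.continuous_inner_sub_apply hL
  have hline : Tendsto (fun s : ℝ => y + s • η) (𝓝 0) (𝓝 y) := by
    simpa using (by fun_prop : Continuous fun s : ℝ => y + s • η).tendsto 0
  have hnear : ∀ᶠ s : ℝ in 𝓝 0, 0 < ⟪η, z - p (y + s • η)⟫ :=
    (tendsto_const_nhds.inner (tendsto_const_nhds.sub (hp.tendsto hL hy hline))).eventually_const_lt
      hη
  obtain ⟨ε, hε, hball⟩ := Metric.nhds_basis_closedBall.eventually_iff.1 hnear
  refine exists_tendsto_zero_eventually_eq_zero hε
    (f := fun i s => ⟪Y i + s • η, Z i - p (Y i + s • η)⟫)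
    (f₀ := fun s => ⟪y + s • η, z - p (y + s • η)⟫) (fun i => ?_) (fun s hs => ?_) (fun s hs => ?_)
    fun s₀ => ?_
  · exact hcont.comp (by fun_prop : Continuous fun s : ℝ => (Y i + s • η, Z i))
  · refine (hp.inner_sub_apply_le _ y z).trans_lt ?_
    rw [inner_add_left, real_inner_smul_left, hyz, zero_add]
    exact mul_neg_of_neg_of_pos hs.2 hη
  · have h1 := hp.inner_sub_apply_le y (y + s • η) z
    have h2 := hball (x := s)
      (by rw [mem_closedBall_zero_iff, Real.norm_of_nonneg hs.1.le]; exact hs.2)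
    rw [inner_add_left, real_inner_smul_left]
    nlinarith [hs.1]
  · exact (hcont.tendsto (y + s₀ • η, z)).comp
      (((hY.comp tendsto_fst).add (tendsto_snd.smul_const η)).prodMk_nhds (hZ.comp tendsto_fst))

end IsSupportMap

end Contact

section ExitPoint

variable {E : Type*} [NormedAddCommGroup E] {K : Set E} {q d : E}

lemma preimage_add_left_mem_nhds_zero (hq : q ∈ interior K) : (q + ·) ⁻¹' K ∈ 𝓝 (0 : E) :=
  (continuous_const_add q).continuousAt.preimage_mem_nhds
    (by simpa only [add_zero] using mem_interior_iff_mem_nhds.1 hq)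

variable [NormedSpace ℝ E]

/-- The point at which the ray from `q` in the direction `d` leaves the convex body `K`, where
`q` is an interior point of `K` and `d ≠ 0`. -/
def exitPoint (K : Set E) (q d : E) : E := q + (gauge ((q + ·) ⁻¹' K) d)⁻¹ • d

lemma add_smul_mem_frontier_iff (hKconv : Convex ℝ K) (hq : q ∈ interior K) {t : ℝ} (ht : 0 < t) :
    q + t • d ∈ frontier K ↔ t = (gauge ((q + ·) ⁻¹' K) d)⁻¹ := by
  change t • d ∈ (Homeomorph.addLeft q) ⁻¹' frontier K ↔ _
  rw [(Homeomorph.addLeft q).preimage_frontier]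
  exact (gauge_eq_one_iff_mem_frontier (hKconv.translate_preimage_right q)
    (preimage_add_left_mem_nhds_zero hq)).symm.trans
    (by rw [gauge_smul_of_nonneg ht.le, smul_eq_mul, mul_eq_one_iff_inv_eq₀ ht.ne',
      inv_eq_iff_eq_inv])

lemma inv_gauge_preimage_add_left_pos (hK : Bornology.IsBounded K) (hq : q ∈ interior K)
    (hd : d ≠ 0) :
    0 < (gauge ((q + ·) ⁻¹' K) d)⁻¹ := by
  refine inv_pos.2 ((gauge_pos (absorbent_nhds_zero (preimage_add_left_mem_nhds_zero hq)) ?_).2 hd)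
  exact (NormedSpace.isVonNBounded_iff ℝ).2
    ((IsometryEquiv.addLeft q).isometry.antilipschitz.isBounded_preimage hK)

lemma exitPoint_mem_frontier (hKconv : Convex ℝ K) (hK : Bornology.IsBounded K)
    (hq : q ∈ interior K) (hd : d ≠ 0) : exitPoint K q d ∈ frontier K :=
  (add_smul_mem_frontier_iff hKconv hq (inv_gauge_preimage_add_left_pos hK hq hd)).2 rfl

lemma exitPoint_eq (hKconv : Convex ℝ K) (hq : q ∈ interior K) {t : ℝ} (ht : 0 < t)
    (h : q + t • d ∈ frontier K) : exitPoint K q d = q + t • d := by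
  rw [exitPoint, ← (add_smul_mem_frontier_iff hKconv hq ht).1 h]

lemma exists_exitPoint_sub_eq_smul (hK : Bornology.IsBounded K) (hq : q ∈ interior K) (hd : d ≠ 0) :
    ∃ t : ℝ, 0 < t ∧ exitPoint K q d - q = t • d :=
  ⟨_, inv_gauge_preimage_add_left_pos hK hq hd, by rw [exitPoint, add_sub_cancel_left]⟩

lemma tendsto_exitPoint (hKconv : Convex ℝ K) (hK : IsCompact K) (hq : q ∈ interior K) (hd : d ≠ 0)
    {ι : Type*} {l : Filter ι} {q' d' : ι → E} (hq' : Tendsto q' l (𝓝 q))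
    (hd' : Tendsto d' l (𝓝 d)) :
    Tendsto (fun i => exitPoint K (q' i) (d' i)) l (𝓝 (exitPoint K q d)) := by
  rw [tendsto_iff_ultrafilter]
  intro U hU
  replace hq' := hq'.mono_left hU
  replace hd' := hd'.mono_left hU
  have hint := hq'.eventually (isOpen_interior.mem_nhds hq)
  have hne := hd'.eventually_ne hd
  obtain ⟨z, hz, hlim⟩ := (hK.of_isClosed_subset isClosed_frontier
      hK.isClosed.frontier_subset).ultrafilter_le_nhds' (U.map fun i => exitPoint K (q' i) (d' i))
    (Filter.mem_map.2 ((hint.and hne).mono fun i hi =>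
      exitPoint_mem_frontier hKconv hK.isBounded hi.1 hi.2))
  replace hlim : Tendsto (fun i => exitPoint K (q' i) (d' i)) U (𝓝 z) := hlim
  have hzq : z ≠ q := by rintro rfl; exact hz.2 hq
  have hsmul : z - q = (‖z - q‖ / ‖d‖) • d := by
    refine tendsto_nhds_unique_of_eventuallyEq (hlim.sub hq')
      (((hlim.sub hq').norm.div hd'.norm (norm_ne_zero_iff.2 hd)).smul hd') ?_
    filter_upwards [hint, hne] with i hi hi0
    obtain ⟨t, ht, hsub⟩ := exists_exitPoint_sub_eq_smul hK.isBounded hi hi0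
    rw [Pi.div_apply, hsub, norm_smul, Real.norm_of_nonneg ht.le,
      mul_div_cancel_right₀ _ (norm_ne_zero_iff.2 hi0)]
  have hz' : q + (‖z - q‖ / ‖d‖) • d = z := by rw [← hsmul, add_sub_cancel]
  have hpos : 0 < ‖z - q‖ / ‖d‖ :=
    div_pos (norm_pos_iff.2 (sub_ne_zero.2 hzq)) (norm_pos_iff.2 hd)
  rwa [exitPoint_eq hKconv hq hpos (hz'.symm ▸ hz), hz']

end ExitPoint

section PlanarGrazes

variable {E : Type*} [NormedAddCommGroup E] [InnerProductSpace ℝ E]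

/-- The analytic form of the hypothesis that the grazes of `L` from the boundary points of `K` are
planar: the points of the graze from `z` are the `p y` with `y ≠ 0` and `⟪y, z - p y⟫ = 0`, and
`a z` is the normal of the plane containing them, scaled such that `⟪a z, z - p y⟫ = 1`. -/
structure HasPlanarGrazes (K L : Set E) (p a : E → E) : Prop where
  one_lt_rank : 1 < Module.rank ℝ E
  isCompact_outer : IsCompact K
  convex_outer : Convex ℝ K
  isCompact_inner : IsCompact L
  convex_inner : Convex ℝ L
  nonempty_interior : (interior L).Nonempty
  subset_interior : L ⊆ interior K
  isSupportMap : IsSupportMap L p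
  inner_normal_eq_one : ∀ z ∈ frontier K, ∀ y ≠ 0, ⟪y, z - p y⟫ = 0 → ⟪a z, z - p y⟫ = 1

namespace HasPlanarGrazes

variable {K L : Set E} {p a : E → E} (h : HasPlanarGrazes K L p a)
include h

lemma apply_mem_interior (y : E) : p y ∈ interior K := h.subset_interior (h.isSupportMap.mem y)

lemma notMem_of_mem_frontier {z : E} (hz : z ∈ frontier K) : z ∉ L :=
  fun hzL => hz.2 (h.subset_interior hzL)

lemma sub_apply_ne_zero {z : E} (hz : z ∈ frontier K) (y : E) : z - p y ≠ 0 := by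
  intro h0
  exact h.notMem_of_mem_frontier hz (sub_eq_zero.1 h0 ▸ h.isSupportMap.mem y)

lemma exitPoint_mem_frontier {q d : E} (hq : q ∈ interior K) (hd : d ≠ 0) :
    exitPoint K q d ∈ frontier K :=
  _root_.exitPoint_mem_frontier h.convex_outer h.isCompact_outer.isBounded hq hd

lemma exists_exitPoint_sub_eq_smul {q d : E} (hq : q ∈ interior K) (hd : d ≠ 0) :
    ∃ t : ℝ, 0 < t ∧ exitPoint K q d - q = t • d :=
  _root_.exists_exitPoint_sub_eq_smul h.isCompact_outer.isBounded hq hd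

lemma tendsto_exitPoint {q d : E} (hq : q ∈ interior K) (hd : d ≠ 0) {ι : Type*} {l : Filter ι}
    {q' d' : ι → E} (hq' : Tendsto q' l (𝓝 q)) (hd' : Tendsto d' l (𝓝 d)) :
    Tendsto (fun i => exitPoint K (q' i) (d' i)) l (𝓝 (exitPoint K q d)) :=
  _root_.tendsto_exitPoint h.convex_outer h.isCompact_outer hq hd hq' hd'

lemma exitPoint_apply_sub {z : E} (hz : z ∈ frontier K) (y : E) :
    exitPoint K (p y) (z - p y) = z := by
  rw [exitPoint_eq h.convex_outer (h.apply_mem_interior y) one_pos] <;>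
    rw [one_smul, add_sub_cancel]
  exact hz

lemma inner_normal_sub {z y y' : E} (hz : z ∈ frontier K) (hy : y ≠ 0) (hy' : y' ≠ 0)
    (hyz : ⟪y, z - p y⟫ = 0) (hyz' : ⟪y', z - p y'⟫ = 0) : ⟪a z, p y - p y'⟫ = 0 := by
  rw [← sub_sub_sub_cancel_left (p y') (p y) z, inner_sub_right,
    h.inner_normal_eq_one z hz y hy hyz, h.inner_normal_eq_one z hz y' hy' hyz', sub_self]

variable [FiniteDimensional ℝ E]

lemma eq_zero_of_forall_inner_contact_eq_zero {z ν : E} (hz : z ∈ frontier K)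
    (hν : ∀ y ≠ 0, ⟪y, z - p y⟫ = 0 → ⟪ν, z - p y⟫ = 0) : ν = 0 :=
  h.isSupportMap.eq_zero_of_forall_inner_contact_eq_zero h.one_lt_rank h.isCompact_inner
    h.convex_inner h.nonempty_interior (h.notMem_of_mem_frontier hz) hν

/-- A limit `(b, c)` of rescaled equations `⟪a Z, ·⟫ = 1` is again proportional to `(a z, 1)`,
because all contacts of `z` are limits of contacts of `Z`. -/
lemma eq_smul_of_tendsto_smul {ι : Type*} {l : Filter ι} [NeBot l] {Z : ι → E} {z b : E}
    {γ : ι → ℝ} {c : ℝ} (hz : z ∈ frontier K) (hZK : ∀ᶠ i in l, Z i ∈ frontier K)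
    (hZ : Tendsto Z l (𝓝 z)) (hb : Tendsto (fun i => γ i • a (Z i)) l (𝓝 b))
    (hc : Tendsto γ l (𝓝 c)) : b = c • a z := by
  rw [← sub_eq_zero]
  refine h.eq_zero_of_forall_inner_contact_eq_zero hz fun y hy hyz => ?_
  obtain ⟨s, hs, hcontact⟩ := h.isSupportMap.exists_contact_tendsto h.isCompact_inner hy hyz
    (real_inner_self_pos.2 (h.sub_apply_ne_zero hz y)) (tendsto_const_nhds (x := y)) hZ
  have hY : Tendsto (fun i => y + s i • (z - p y)) l (𝓝 y) := by
    simpa only [zero_smul, add_zero] using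
      (tendsto_const_nhds (x := y)).add (hs.smul_const (z - p y))
  have hbc : ⟪b, z - p y⟫ = c := by
    refine tendsto_nhds_unique_of_eventuallyEq
      (hb.inner (hZ.sub (h.isSupportMap.tendsto h.isCompact_inner hy hY))) hc ?_
    filter_upwards [hcontact, hZK, hY.eventually_ne hy] with i hi hiK hi0
    rw [real_inner_smul_left, h.inner_normal_eq_one _ hiK _ hi0 hi, mul_one]
  rw [inner_sub_left, real_inner_smul_left, hbc, h.inner_normal_eq_one z hz y hy hyz, mul_one,
    sub_self]

lemma tendsto_normal {ι : Type*} {l : Filter ι} {Z : ι → E} {z : E} (hz : z ∈ frontier K)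
    (hZK : ∀ᶠ i in l, Z i ∈ frontier K) (hZ : Tendsto Z l (𝓝 z)) :
    Tendsto (fun i => a (Z i)) l (𝓝 (a z)) := by
  rw [tendsto_iff_ultrafilter]
  intro U hU
  set γ : ι → ℝ := fun i => (1 + ‖a (Z i)‖)⁻¹
  have hγ (i) : 0 < γ i := by positivity
  have hnorm (i) : ‖γ i • a (Z i)‖ = 1 - γ i := by
    rw [norm_smul, Real.norm_of_nonneg (hγ i).le]
    simp only [γ]
    field_simp
    ring
  obtain ⟨b, -, hb⟩ := (isCompact_closedBall (0 : E) 1).ultrafilter_le_nhds'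
    (U.map fun i => γ i • a (Z i)) (Filter.mem_map.2 (univ_mem' fun i =>
      mem_closedBall_zero_iff.2 (by linarith [hnorm i, hγ i])))
  replace hb : Tendsto (fun i => γ i • a (Z i)) U (𝓝 b) := hb
  have hc : Tendsto γ U (𝓝 (1 - ‖b‖)) := by
    refine (tendsto_const_nhds.sub hb.norm).congr fun i => ?_
    rw [hnorm, sub_sub_cancel]
  have hbz := h.eq_smul_of_tendsto_smul hz (hU hZK) (hZ.mono_left hU) hb hc
  have hc0 : 1 - ‖b‖ ≠ 0 := by
    intro h0
    rw [h0, zero_smul] at hbz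
    simp [hbz] at h0
  have hdiv := (hc.inv₀ hc0).smul hb
  rw [(inv_smul_eq_iff₀ hc0).2 hbz] at hdiv
  exact hdiv.congr fun i => inv_smul_smul₀ (hγ i).ne' _

end HasPlanarGrazes

end PlanarGrazes

section Smoothness

lemma exists_norm_eq_one_inner_eq_zero (u v : E3) :
    ∃ w : E3, ‖w‖ = 1 ∧ ⟪u, w⟫ = 0 ∧ ⟪v, w⟫ = 0 := by
  have hlt : Module.finrank ℝ (Submodule.span ℝ ({u, v} : Set E3)) < 3 := by
    classical
    have hle := (finrank_span_finset_le_card (R := ℝ) ({u, v} : Finset E3)).trans Finset.card_le_two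
    rw [Finset.coe_pair] at hle
    exact Nat.lt_succ_of_le hle
  have hsum := (Submodule.span ℝ ({u, v} : Set E3)).finrank_add_finrank_orthogonal
  rw [finrank_euclideanSpace_fin] at hsum
  obtain ⟨w, hw, hw0⟩ := (Submodule.span ℝ ({u, v} : Set E3))ᗮ.ne_bot_iff.1
    (fun hbot => by rw [hbot, finrank_bot] at hsum; omega)
  refine ⟨‖w‖⁻¹ • w, norm_smul_inv_norm hw0, ?_, ?_⟩ <;>
    rw [inner_smul_right, hw _ (Submodule.subset_span (by simp)), mul_zero]

lemma exists_eq_smul_of_inner_eq_zero {a b e v : E3} (hab : LinearIndependent ℝ ![a, b])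
    (he : e ≠ 0) (hae : ⟪a, e⟫ = 0) (hbe : ⟪b, e⟫ = 0) (hav : ⟪a, v⟫ = 0) (hbv : ⟪b, v⟫ = 0) :
    ∃ c : ℝ, v = c • e := by
  set S := Submodule.span ℝ (range ![a, b])
  have hS : Module.finrank ℝ S = 2 := finrank_span_eq_card hab
  have hsum := S.finrank_add_finrank_orthogonal
  rw [finrank_euclideanSpace_fin, hS] at hsum
  have hmem {x : E3} (hax : ⟪a, x⟫ = 0) (hbx : ⟪b, x⟫ = 0) : x ∈ Sᗮ := by
    refine (Submodule.mem_orthogonal _ _).2 fun u hu => ?_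
    simp only [S, Matrix.range_cons_cons_empty, Submodule.mem_span_pair] at hu
    obtain ⟨s, t, rfl⟩ := hu
    rw [inner_add_left, real_inner_smul_left, real_inner_smul_left, hax, hbx]
    simp
  obtain ⟨c, hc⟩ := (finrank_eq_one_iff_of_nonzero' (K := ℝ) (⟨e, hmem hae hbe⟩ : Sᗮ)
    (by simpa [Subtype.ext_iff] using he)).1 (by omega) ⟨v, hmem hav hbv⟩
  exact ⟨c, (congrArg Subtype.val hc).symm⟩

variable {E : Type*} [NormedAddCommGroup E] [InnerProductSpace ℝ E]

/-- The normal cone of `L` at `q`. -/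
def normalCone (L : Set E) (q : E) : Set E := {u | ∀ x ∈ L, ⟪u, x⟫ ≤ ⟪u, q⟫}

/-- The vector `ζ` exposes the ray through `y` in the normal cone of `L` at `q`. -/
structure ExposesNormal (L : Set E) (q y ζ : E) : Prop where
  inner_eq_zero : ⟪y, ζ⟫ = 0
  exists_eq_smul : ∀ u ∈ normalCone L q, ⟪u, ζ⟫ = 0 → ∃ t : ℝ, u = t • y

lemma linearIndependent_pair_of_inner_eq_zero {y a d : E} (hy : y ≠ 0) (hyd : ⟪y, d⟫ = 0)
    (had : ⟪a, d⟫ ≠ 0) : LinearIndependent ℝ ![y, a] := by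
  refine LinearIndependent.pair_iff.2 fun s t hst => ?_
  have ht : t = 0 := by
    have := congrArg (⟪·, d⟫) hst
    simp only [inner_add_left, real_inner_smul_left, hyd, mul_zero, zero_add,
      inner_zero_left] at this
    exact (mul_eq_zero.1 this).resolve_right had
  subst ht
  exact ⟨(smul_eq_zero.1 (by simpa using hst)).resolve_right hy, rfl⟩

lemma ExposesNormal.ne_zero {L : Set E} {q y y' ζ : E} (hζ : ExposesNormal L q y ζ)
    (hli : LinearIndependent ℝ ![y, y']) (hy' : y' ∈ normalCone L q) : ζ ≠ 0 := by
  rintro rfl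
  obtain ⟨t, ht⟩ := hζ.exists_eq_smul y' hy' (inner_zero_right _)
  have := LinearIndependent.pair_iff.1 hli t (-1) (by rw [ht]; simp)
  norm_num at this

lemma isCompact_normalCone_inter [FiniteDimensional ℝ E] {L : Set E} {q o : E}
    (ho : o ∈ interior L) : IsCompact (normalCone L q ∩ {u | ⟪u, q - o⟫ = 1}) := by
  obtain ⟨r, hr, hball⟩ := Metric.nhds_basis_closedBall.mem_iff.1 (mem_interior_iff_mem_nhds.1 ho)
  have hclosed : IsClosed (normalCone L q ∩ {u | ⟪u, q - o⟫ = 1}) := by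
    refine IsClosed.inter ?_ (isClosed_eq (by fun_prop) continuous_const)
    simp only [normalCone, ofPred_forall]
    exact isClosed_iInter fun x => isClosed_iInter fun _ => isClosed_le (by fun_prop) (by fun_prop)
  refine (isCompact_closedBall (0 : E) r⁻¹).of_isClosed_subset hclosed fun u ⟨hu, hu1⟩ => ?_
  rcases eq_or_ne u 0 with rfl | hu0
  · simp [hr.le]
  have hle := hu (o + (r * ‖u‖⁻¹) • u) (hball (by
    rw [mem_closedBall, dist_self_add_left, mul_smul, norm_smul, norm_smul, norm_inv, norm_norm,
      inv_mul_cancel₀ (norm_ne_zero_iff.2 hu0), mul_one, Real.norm_of_nonneg hr.le]))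
  rw [mem_ofPred_eq, inner_sub_right] at hu1
  rw [inner_add_right, inner_smul_right, real_inner_self_eq_norm_sq] at hle
  rw [mem_closedBall_zero_iff, le_inv_comm₀ (norm_pos_iff.2 hu0) hr, ← one_div,
    le_div_iff₀ (norm_pos_iff.2 hu0)]
  have : r * ‖u‖⁻¹ * ‖u‖ ^ 2 = r * ‖u‖ := by field_simp
  linarith

lemma inner_sub_pos_of_mem_normalCone {L : Set E} {q o u : E} (ho : o ∈ interior L)
    (hu : u ∈ normalCone L q) (hu0 : u ≠ 0) : 0 < ⟪u, q - o⟫ := by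
  obtain ⟨x, hx, hlt⟩ := exists_mem_inner_lt_of_mem_interior ho hu0
  rw [inner_sub_right]
  exact sub_pos.2 (hlt.trans_le (hu x hx))

lemma inv_inner_smul_mem_normalCone_inter {L : Set E} {q o u : E} (ho : o ∈ interior L)
    (hu : u ∈ normalCone L q) (hu0 : u ≠ 0) :
    (⟪u, q - o⟫)⁻¹ • u ∈ normalCone L q ∩ {u | ⟪u, q - o⟫ = 1} := by
  have hpos := inner_sub_pos_of_mem_normalCone ho hu hu0
  refine ⟨fun x hx => ?_, ?_⟩
  · rw [real_inner_smul_left, real_inner_smul_left]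
    exact mul_le_mul_of_nonneg_left (hu x hx) (inv_pos.2 hpos).le
  · rw [mem_ofPred_eq, real_inner_smul_left, inv_mul_cancel₀ hpos.ne']

lemma linearIndependent_pair_of_inner_eq_one {y y' d : E} (hne : y ≠ y') (hy : ⟪y, d⟫ = 1)
    (hy' : ⟪y', d⟫ = 1) : LinearIndependent ℝ ![y, y'] := by
  refine LinearIndependent.pair_iff.2 fun s t hst => ?_
  have hsum : s + t = 0 := by
    simpa [inner_add_left, real_inner_smul_left, hy, hy'] using congrArg (⟪·, d⟫) hst
  obtain rfl : t = -s := by linarith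
  rw [neg_smul, ← sub_eq_add_neg, ← smul_sub] at hst
  have hs := (smul_eq_zero.1 hst).resolve_right (sub_ne_zero.2 hne)
  exact ⟨hs, by rw [hs, neg_zero]⟩

lemma exposesNormal_of_forall_norm_le {L : Set E} {q o y y' : E} (ho : o ∈ interior L)
    (hy : y ∈ normalCone L q ∩ {u | ⟪u, q - o⟫ = 1})
    (hfar : ∀ u ∈ normalCone L q ∩ {u | ⟪u, q - o⟫ = 1}, ‖u - y'‖ ≤ ‖y - y'‖) :
    ExposesNormal L q y (y - y' - ⟪y, y - y'⟫ • (q - o)) := by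
  have hinner {u : E} (hu : ⟪u, q - o⟫ = 1) :
      ⟪u, y - y' - ⟪y, y - y'⟫ • (q - o)⟫ = ⟪u - y, y - y'⟫ := by
    rw [inner_sub_right, inner_smul_right, hu, mul_one, ← inner_sub_left]
  have hbase : ∀ u ∈ normalCone L q ∩ {u | ⟪u, q - o⟫ = 1}, ⟪u - y, y - y'⟫ = 0 → u = y := by
    intro u hu h0
    have hpyth : ‖u - y'‖ ^ 2 = ‖u - y‖ ^ 2 + ‖y - y'‖ ^ 2 := by
      rw [← sub_add_sub_cancel u y y', norm_add_sq_real, h0]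
      ring
    have hle := pow_le_pow_left₀ (norm_nonneg _) (hfar u hu) 2
    have : ‖u - y‖ = 0 := by nlinarith [norm_nonneg (u - y)]
    exact sub_eq_zero.1 (norm_eq_zero.1 this)
  refine ⟨by rw [hinner hy.2, sub_self, inner_zero_left], fun u hu hu0 => ?_⟩
  rcases eq_or_ne u 0 with rfl | hne
  · exact ⟨0, (zero_smul ℝ y).symm⟩
  have hbu := inv_inner_smul_mem_normalCone_inter ho hu hne
  refine ⟨⟪u, q - o⟫, ?_⟩
  rw [← hbase _ hbu (by rw [← hinner hbu.2, real_inner_smul_left, hu0, mul_zero]),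
    smul_inv_smul₀ (inner_sub_pos_of_mem_normalCone ho hu hne).ne']

lemma exists_exposesNormal [FiniteDimensional ℝ E] {L : Set E} (hLi : (interior L).Nonempty)
    {q y y' : E} (hy : y ∈ normalCone L q) (hy' : y' ∈ normalCone L q)
    (hli : LinearIndependent ℝ ![y, y']) :
    ∃ y₁ ∈ normalCone L q, ∃ y₂ ∈ normalCone L q, LinearIndependent ℝ ![y₁, y₂] ∧
      ∃ ζ, ExposesNormal L q y₁ ζ := by
  obtain ⟨o, ho⟩ := hLi
  have hyF := inv_inner_smul_mem_normalCone_inter ho hy (hli.ne_zero 0)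
  have hyF' := inv_inner_smul_mem_normalCone_inter ho hy' (hli.ne_zero 1)
  set x := (⟪y, q - o⟫)⁻¹ • y
  set x' := (⟪y', q - o⟫)⁻¹ • y'
  have hxx' : x ≠ x' := fun heq => by
    have := LinearIndependent.pair_iff.1 hli (⟪y, q - o⟫)⁻¹ (-(⟪y', q - o⟫)⁻¹)
      (by rw [neg_smul, ← sub_eq_add_neg]; exact sub_eq_zero.2 heq)
    exact (inv_pos.2 (inner_sub_pos_of_mem_normalCone ho hy (hli.ne_zero 0))).ne' this.1
  obtain ⟨y₁, hy₁, hfar⟩ := (isCompact_normalCone_inter ho).exists_isMaxOn ⟨x, hyF⟩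
    (f := fun u => ‖u - x'‖) (by fun_prop)
  have hne : y₁ ≠ x' := by
    rintro rfl
    have := hfar hyF
    simp only [mem_ofPred_eq, sub_self, norm_zero] at this
    exact hxx' (sub_eq_zero.1 (norm_le_zero_iff.1 this))
  exact ⟨y₁, hy₁.1, x', hyF'.1, linearIndependent_pair_of_inner_eq_one hne hy₁.2 hyF'.2, _,
    exposesNormal_of_forall_norm_le ho hy₁ fun u hu => hfar hu⟩

namespace IsSupportMap

variable {L : Set E} {p : E → E} (hp : IsSupportMap L p)
include hp

lemma mem_normalCone (y : E) : y ∈ normalCone L (p y) := fun x hx => hp.inner_le y x hx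

lemma apply_eq_of_mem_normalCone {q y : E} (hy : y ≠ 0) (hq : q ∈ L) (hyq : y ∈ normalCone L q) :
    p y = q := (hp.eq_of_inner_le y hy q hq (hyq _ (hp.mem y))).symm

end IsSupportMap

end Smoothness

lemma IsSupportMap.exists_tendsto_direction {E : Type*} [NormedAddCommGroup E]
    [InnerProductSpace ℝ E] [FiniteDimensional ℝ E] {L : Set E} {p : E → E} (hp : IsSupportMap L p)
    {ι : Type*} {l : Filter ι} [NeBot l] {Y : ι → E} {y : E} (hY : Tendsto Y l (𝓝 y))
    (hne : ∀ᶠ i in l, p (Y i) ≠ p y) :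
    ∃ (U : Ultrafilter ι) (v : E), ↑U ≤ l ∧ ‖v‖ = 1 ∧
      Tendsto (fun i => ‖p (Y i) - p y‖⁻¹ • (p (Y i) - p y)) U (𝓝 v) ∧ ⟪y, v⟫ = 0 ∧
      ∀ u ∈ normalCone L (p y), ⟪u, v⟫ ≤ 0 := by
  obtain ⟨U, hU⟩ := exists_ultrafilter_le l
  set V : ι → E := fun i => ‖p (Y i) - p y‖⁻¹ • (p (Y i) - p y)
  obtain ⟨v, hv, hVv⟩ := (isCompact_sphere (0 : E) 1).ultrafilter_le_nhds' (U.map V)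
    (hU (hne.mono fun i hi => mem_sphere_zero_iff_norm.2
      (norm_smul_inv_norm (𝕜 := ℝ) (sub_ne_zero.2 hi))))
  replace hVv : Tendsto V U (𝓝 v) := hVv
  have hle (u : E) (hu : u ∈ normalCone L (p y)) : ⟪u, v⟫ ≤ 0 := by
    refine le_of_tendsto' (tendsto_const_nhds.inner hVv) fun i => ?_
    rw [inner_smul_right, inner_sub_right]
    exact mul_nonpos_of_nonneg_of_nonpos (by positivity) (sub_nonpos.2 (hu _ (hp.mem _)))
  refine ⟨U, v, hU, mem_sphere_zero_iff_norm.1 hv, hVv, ?_, hle⟩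
  refine le_antisymm (hle y (hp.mem_normalCone y))
    (ge_of_tendsto' ((hY.mono_left hU).inner hVv) fun i => ?_)
  rw [inner_smul_right]
  exact mul_nonneg (by positivity) (hp.inner_apply_sub_apply_nonneg _ _)

namespace HasPlanarGrazes

variable {K L : Set E3} {p a : E3 → E3} (h : HasPlanarGrazes K L p a)
include h

/-- Rotate the normal `y` slightly towards `e`, correcting it along `a z` so that the support plane
still passes through `z`: the contact points stay in the plane of the graze. -/
lemma exists_tendsto_apply_sub_orthogonal {y ζ e : E3} (hy : y ≠ 0) (hζ : ζ ≠ 0)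
    (hexp : ExposesNormal L (p y) y ζ) (he : e ≠ 0) (hye : ⟪y, e⟫ = 0)
    (hae : ⟪a (exitPoint K (p y) ζ), e⟫ = 0) :
    ∃ Y : ℝ → E3, Tendsto Y (𝓝[>] 0) (𝓝 y) ∧ ∀ᶠ δ in 𝓝[>] 0, p (Y δ) ≠ p y ∧
      ⟪a (exitPoint K (p y) ζ), p (Y δ) - p y⟫ = 0 ∧ 0 ≤ ⟪e, p (Y δ) - p y⟫ := by
  set z := exitPoint K (p y) ζ
  have hz : z ∈ frontier K := h.exitPoint_mem_frontier (h.apply_mem_interior y) hζ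
  obtain ⟨τ, hτ, hzζ⟩ := h.exists_exitPoint_sub_eq_smul (h.apply_mem_interior y) hζ
  have hyz : ⟪y, z - p y⟫ = 0 := by rw [hzζ, inner_smul_right, hexp.inner_eq_zero, mul_zero]
  have hline : Tendsto (fun δ : ℝ => y + δ • e) (𝓝[>] 0) (𝓝 y) := by
    simpa using ((by fun_prop : Continuous fun δ : ℝ => y + δ • e).tendsto 0).mono_left
      nhdsWithin_le_nhds
  obtain ⟨s, hs, hcontact⟩ := h.isSupportMap.exists_contact_tendsto h.isCompact_inner hy hyz
    ((h.inner_normal_eq_one z hz y hy hyz).symm ▸ one_pos) hline (tendsto_const_nhds (x := z))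
  set Y : ℝ → E3 := fun δ => y + δ • e + s δ • a z
  have hY : Tendsto Y (𝓝[>] 0) (𝓝 y) := by simpa using hline.add (hs.smul_const (a z))
  refine ⟨Y, hY, ?_⟩
  filter_upwards [hcontact, hY.eventually_ne hy, self_mem_nhdsWithin] with δ hδ hYδ hδ0
  have haD : ⟪a z, p (Y δ) - p y⟫ = 0 := h.inner_normal_sub hz hYδ hy hδ hyz
  refine ⟨fun hpY => ?_, haD, ?_⟩
  · have hYζ : ⟪Y δ, ζ⟫ = 0 := by
      rw [hpY, hzζ, inner_smul_right] at hδ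
      exact (mul_eq_zero.1 hδ).resolve_left hτ.ne'
    obtain ⟨t, ht⟩ := hexp.exists_eq_smul _ (hpY ▸ h.isSupportMap.mem_normalCone (Y δ)) hYζ
    have hδe := congrArg (⟪·, e⟫) ht
    simp only [Y, inner_add_left, real_inner_smul_left, hye, hae, mul_zero, zero_add, add_zero]
      at hδe
    exact (mul_pos hδ0 (real_inner_self_pos.2 he)).ne' hδe
  · have h1 := h.isSupportMap.inner_apply_sub_apply_nonneg (Y δ) y
    have h2 := h.isSupportMap.inner_apply_sub_apply_nonneg y (Y δ)
    rw [← neg_sub, inner_neg_right] at h2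
    simp only [Y, inner_add_left, real_inner_smul_left] at h1
    rw [haD, mul_zero, add_zero] at h1
    exact nonneg_of_mul_nonneg_right (by linarith : 0 ≤ δ * ⟪e, p (Y δ) - p y⟫) hδ0

/-- The contact points for normals rotated towards `e` leave `p y` in the direction `e` while
staying in `L`, so this direction bounds the normal cone. -/
lemma inner_nonpos_of_mem_normalCone {y ζ e u : E3} (hy : y ≠ 0) (hζ : ζ ≠ 0)
    (hexp : ExposesNormal L (p y) y ζ) (he : ‖e‖ = 1) (hye : ⟪y, e⟫ = 0)
    (hae : ⟪a (exitPoint K (p y) ζ), e⟫ = 0) (hu : u ∈ normalCone L (p y)) : ⟪u, e⟫ ≤ 0 := by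
  have he0 : e ≠ 0 := norm_ne_zero_iff.1 (by rw [he]; norm_num)
  obtain ⟨Y, hY, hgood⟩ := h.exists_tendsto_apply_sub_orthogonal hy hζ hexp he0 hye hae
  set z := exitPoint K (p y) ζ
  obtain ⟨τ, -, hzζ⟩ := h.exists_exitPoint_sub_eq_smul (h.apply_mem_interior y) hζ
  have hyz : ⟪y, z - p y⟫ = 0 := by rw [hzζ, inner_smul_right, hexp.inner_eq_zero, mul_zero]
  have haz := h.inner_normal_eq_one z (h.exitPoint_mem_frontier (h.apply_mem_interior y) hζ) y hy
    hyz
  obtain ⟨U, v, hU, hv, hVv, hyv, hle⟩ :=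
    h.isSupportMap.exists_tendsto_direction hY (hgood.mono fun δ hδ => hδ.1)
  replace hgood := hgood.filter_mono hU
  have hV (w : E3) : Tendsto (fun δ => ‖p (Y δ) - p y‖⁻¹ * ⟪w, p (Y δ) - p y⟫) U (𝓝 ⟪w, v⟫) := by
    simpa only [inner_smul_right] using Tendsto.inner (𝕜 := ℝ) (tendsto_const_nhds (x := w)) hVv
  have hav : ⟪a z, v⟫ = 0 := tendsto_nhds_unique_of_eventuallyEq (hV (a z)) tendsto_const_nhds
    (hgood.mono fun δ hδ => by simp only [hδ.2.1, mul_zero])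
  have hev : 0 ≤ ⟪e, v⟫ := ge_of_tendsto (hV e)
    (hgood.mono fun δ hδ => mul_nonneg (by positivity) hδ.2.2)
  obtain ⟨c, rfl⟩ := exists_eq_smul_of_inner_eq_zero (linearIndependent_pair_of_inner_eq_zero hy hyz
    (haz.trans_ne one_ne_zero)) he0 hye hae hyv hav
  have hc : 0 ≤ c := by
    simpa [inner_smul_right, real_inner_self_eq_norm_sq, he] using hev
  have hc0 : c ≠ 0 := by rintro rfl; simp at hv
  have := hle u hu
  rw [inner_smul_right] at this
  exact nonpos_of_mul_nonpos_right this (hc.lt_of_ne' hc0)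

lemma inner_eq_zero_of_exposesNormal {y y' ζ E₀ : E3} (hy : y ≠ 0)
    (hexp : ExposesNormal L (p y) y ζ) (hy' : y' ∈ normalCone L (p y))
    (hli : LinearIndependent ℝ ![y, y']) (hE₀ : E₀ ≠ 0) (hyE₀ : ⟪y, E₀⟫ = 0)
    (hyE₀' : ⟪y', E₀⟫ = 0) :
    ⟪a (exitPoint K (p y) ζ), E₀⟫ = 0 ∧ ∀ u ∈ normalCone L (p y), ⟪u, E₀⟫ = 0 := by
  obtain ⟨e, he, hye, hae⟩ := exists_norm_eq_one_inner_eq_zero y (a (exitPoint K (p y) ζ))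
  have hζ := hexp.ne_zero hli hy'
  have hue : ∀ u ∈ normalCone L (p y), ⟪u, e⟫ = 0 := fun u hu =>
    le_antisymm (h.inner_nonpos_of_mem_normalCone hy hζ hexp he hye hae hu) <| by
      simpa using h.inner_nonpos_of_mem_normalCone hy hζ hexp (e := -e) (by rwa [norm_neg])
        (by rw [inner_neg_right, hye, neg_zero]) (by rw [inner_neg_right, hae, neg_zero]) hu
  have he0 : e ≠ 0 := norm_ne_zero_iff.1 (by rw [he]; norm_num)
  obtain ⟨c, rfl⟩ := exists_eq_smul_of_inner_eq_zero hli he0 hye (hue y' hy') hyE₀ hyE₀'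
  exact ⟨by rw [inner_smul_right, hae, mul_zero],
    fun u hu => by rw [inner_smul_right, hue u hu, mul_zero]⟩

/-- The body `L` is smooth. An edge of a normal cone, spanned by independent `y, y'` and
orthogonal to `E₀`, would force `a z ⟂ E₀` for all `z` seen from `p y` in exposing directions
`E₀ + ε • ζ`, and hence, for `ε → 0`, also for `z - p y` parallel to `E₀`. -/
lemma not_linearIndependent_of_mem_normalCone {q y y' : E3} (hq : q ∈ L) (hy : y ∈ normalCone L q)
    (hy' : y' ∈ normalCone L q) : ¬ LinearIndependent ℝ ![y, y'] := by
  intro hli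
  obtain ⟨y, hy, y', hy', hli, ζ, hexp⟩ := exists_exposesNormal h.nonempty_interior hy hy' hli
  have hy0 : y ≠ 0 := hli.ne_zero 0
  obtain rfl := h.isSupportMap.apply_eq_of_mem_normalCone hy0 hq hy
  obtain ⟨E₀, hE₀, hyE₀, hyE₀'⟩ := exists_norm_eq_one_inner_eq_zero y y'
  have hE₀0 : E₀ ≠ 0 := norm_ne_zero_iff.1 (by rw [hE₀]; norm_num)
  have hcone := (h.inner_eq_zero_of_exposesNormal hy0 hexp hy' hli hE₀0 hyE₀ hyE₀').2
  have hexpε {ε : ℝ} (hε : ε ≠ 0) : ExposesNormal L (p y) y (E₀ + ε • ζ) := by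
    refine ⟨by rw [inner_add_right, inner_smul_right, hyE₀, hexp.inner_eq_zero]; simp,
      fun u hu huε => hexp.exists_eq_smul u hu ?_⟩
    rw [inner_add_right, inner_smul_right, hcone u hu, zero_add] at huε
    exact (mul_eq_zero.1 huε).resolve_left hε
  have hint := h.apply_mem_interior y
  set z := exitPoint K (p y) E₀
  have hz : z ∈ frontier K := h.exitPoint_mem_frontier hint hE₀0
  have hdir : Tendsto (fun ε : ℝ => E₀ + ε • ζ) (𝓝[≠] 0) (𝓝 E₀) := by
    simpa using ((by fun_prop : Continuous fun ε : ℝ => E₀ + ε • ζ).tendsto 0).mono_left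
      nhdsWithin_le_nhds
  have hlim := h.tendsto_normal hz ((hdir.eventually_ne hE₀0).mono fun ε hε =>
    h.exitPoint_mem_frontier hint hε) (h.tendsto_exitPoint hint hE₀0 tendsto_const_nhds hdir)
  have hzero : ⟪a z, E₀⟫ = 0 := tendsto_nhds_unique_of_eventuallyEq
    (hlim.inner tendsto_const_nhds) tendsto_const_nhds (by
      filter_upwards [self_mem_nhdsWithin] with ε hε
      exact (h.inner_eq_zero_of_exposesNormal hy0 (hexpε hε) hy' hli hE₀0 hyE₀ hyE₀').1)
  obtain ⟨t, -, ht⟩ := h.exists_exitPoint_sub_eq_smul hint hE₀0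
  have hone := h.inner_normal_eq_one z hz y hy0 (by rw [ht, inner_smul_right, hyE₀, mul_zero])
  rw [ht, inner_smul_right, hzero, mul_zero] at hone
  exact zero_ne_one hone

lemma eq_of_apply_eq {y y' : E3} (hy : ‖y‖ = 1) (hy' : ‖y'‖ = 1) (hpy : p y = p y') : y = y' := by
  have hmem' : y' ∈ normalCone L (p y) := hpy ▸ h.isSupportMap.mem_normalCone y'
  have hli := h.not_linearIndependent_of_mem_normalCone (h.isSupportMap.mem y)
    (h.isSupportMap.mem_normalCone y) hmem'
  have hy0 : y ≠ 0 := norm_ne_zero_iff.1 (by rw [hy]; norm_num)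
  have hy0' : y' ≠ 0 := norm_ne_zero_iff.1 (by rw [hy']; norm_num)
  rw [LinearIndependent.pair_iff' hy0] at hli
  push Not at hli
  obtain ⟨t, rfl⟩ := hli
  obtain ⟨o, ho⟩ := h.nonempty_interior
  have h1 := inner_sub_pos_of_mem_normalCone ho (h.isSupportMap.mem_normalCone y) hy0
  have h2 := inner_sub_pos_of_mem_normalCone ho hmem' hy0'
  rw [real_inner_smul_left] at h2
  have ht : 0 < t := pos_of_mul_pos_left h2 h1.le
  rw [norm_smul, hy, mul_one, Real.norm_of_nonneg ht.le] at hy'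
  rw [hy', one_smul]

end HasPlanarGrazes

section Subgradient

variable {E : Type*} [NormedAddCommGroup E] [InnerProductSpace ℝ E] {N : E → ℝ}

/-- The vector `g` is a subgradient of `N` at `η`. -/
def IsSubgradient (N : E → ℝ) (η g : E) : Prop := ∀ w, N η + ⟪g, w - η⟫ ≤ N w

/-- Points on a common line or plane orthogonal to `Z` have subgradients of `N` that agree in the
direction `A`. -/
def SharesSubgradients (N : E → ℝ) (A Z : E) : Prop :=
  ∀ η η', ⟪η - η', Z⟫ = 0 →
    ∃ g g', IsSubgradient N η g ∧ IsSubgradient N η' g' ∧ ⟪A, g - g'⟫ = 0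

lemma IsSubgradient.norm_le {η g : E} {C : ℝ} (hg : IsSubgradient N η g) (hη : 0 ≤ N η)
    (hC : ∀ w ∈ closedBall η 1, N w ≤ C) : ‖g‖ ≤ C := by
  rcases eq_or_ne g 0 with rfl | hg0
  · simpa using hη.trans (hC η (mem_closedBall_self zero_le_one))
  have hle := (hg (η + ‖g‖⁻¹ • g)).trans (hC _ (by
    rw [mem_closedBall, dist_self_add_left]
    exact (norm_smul_inv_norm (𝕜 := ℝ) hg0).le))
  rw [add_sub_cancel_left, inner_smul_right, real_inner_self_eq_norm_sq, sq,
    inv_mul_cancel_left₀ (norm_ne_zero_iff.2 hg0)] at hle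
  linarith

lemma convexOn_of_forall_exists_isSubgradient (h : ∀ η, ∃ g, IsSubgradient N η g) :
    ConvexOn ℝ univ N := by
  refine ⟨convex_univ, fun x _ y _ s t hs ht hst => ?_⟩
  obtain ⟨g, hg⟩ := h (s • x + t • y)
  have hx := mul_le_mul_of_nonneg_left (hg x) hs
  have hy := mul_le_mul_of_nonneg_left (hg y) ht
  have hzero : s * ⟪g, x - (s • x + t • y)⟫ + t * ⟪g, y - (s • x + t • y)⟫ = 0 := by
    rw [← inner_smul_right, ← inner_smul_right, ← inner_add_right]
    obtain rfl : t = 1 - s := by linarith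
    convert inner_zero_right g using 2
    module
  simp only [smul_eq_mul]
  calc N (s • x + t • y) = s * N (s • x + t • y) + t * N (s • x + t • y) := by
        rw [← add_mul, hst, one_mul]
    _ ≤ s * N x + t * N y := by linarith

lemma exists_tendsto_ultrafilter_isSubgradient [FiniteDimensional ℝ E] {ι : Type*}
    {U : Ultrafilter ι} {N : ι → E → ℝ} {g : ι → E → E} (hN : ∀ i v, 0 ≤ N i v)
    (hg : ∀ i v, IsSubgradient (N i) v (g i v))
    (hbdd : ∀ R, ∃ C, ∀ᶠ i in U, ∀ v ∈ closedBall (0 : E) R, N i v ≤ C) :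
    ∃ N₀ : E → ℝ, ∀ (x : ι → E) (η : E), Tendsto x U (𝓝 η) →
      Tendsto (fun i => N i (x i)) U (𝓝 (N₀ η)) ∧
      ∃ γ, IsSubgradient N₀ η γ ∧ Tendsto (fun i => g i (x i)) U (𝓝 γ) := by
  have hgbdd {x : ι → E} {η : E} (hx : Tendsto x U (𝓝 η)) :
      ∃ γ, Tendsto (fun i => g i (x i)) U (𝓝 γ) := by
    obtain ⟨C, hC⟩ := hbdd (‖η‖ + 2)
    obtain ⟨γ, -, hγ⟩ := (isCompact_closedBall (0 : E) C).ultrafilter_le_nhds'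
      (U.map fun i => g i (x i)) (Filter.mem_map.2 <| by
        filter_upwards [hC, hx.norm.eventually_le_const (lt_add_one ‖η‖)] with i hi hxi
        refine mem_closedBall_zero_iff.2 ((hg i (x i)).norm_le (hN _ _) fun w hw => hi w ?_)
        rw [mem_closedBall_zero_iff]
        linarith [norm_le_norm_add_norm_sub' w (x i), mem_closedBall_iff_norm.1 hw])
    exact ⟨γ, hγ⟩
  have hconst (η : E) : ∃ x, Tendsto (fun i => N i η) U (𝓝 x) := by
    obtain ⟨C, hC⟩ := hbdd ‖η‖
    obtain ⟨x, -, hx⟩ := (isCompact_Icc (a := 0) (b := C)).ultrafilter_le_nhds'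
      (U.map fun i => N i η)
      (hC.mono fun i hi => ⟨hN i η, hi η (mem_closedBall_zero_iff.2 le_rfl)⟩)
    exact ⟨x, hx⟩
  choose N₀ hN₀ using hconst
  refine ⟨N₀, fun x η hx => ?_⟩
  obtain ⟨γ, hγ⟩ := hgbdd hx
  obtain ⟨γ', hγ'⟩ := hgbdd (tendsto_const_nhds (x := η))
  have hlower : Tendsto (fun i => N i η + ⟪g i η, x i - η⟫) U (𝓝 (N₀ η)) := by
    simpa using (hN₀ η).add (hγ'.inner (hx.sub (tendsto_const_nhds (x := η))))
  have hupper : Tendsto (fun i => N i η - ⟪g i (x i), η - x i⟫) U (𝓝 (N₀ η)) := by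
    simpa using (hN₀ η).sub (hγ.inner ((tendsto_const_nhds (x := η)).sub hx))
  have hlim : Tendsto (fun i => N i (x i)) U (𝓝 (N₀ η)) :=
    tendsto_of_tendsto_of_tendsto_of_le_of_le hlower hupper (fun i => hg i η (x i))
      fun i => by linarith [hg i (x i) η]
  exact ⟨hlim, γ, fun w => le_of_tendsto_of_tendsto'
    (hlim.add (hγ.inner ((tendsto_const_nhds (x := w)).sub hx))) (hN₀ w) fun i => hg i (x i) w, hγ⟩

end Subgradient

section Scales

lemma exists_tendsto_atTop_le_pow_mul {m : ℕ → ℝ} {κ : ℝ} (hκ : 0 < κ)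
    (hm : ∀ j, κ * (1 / 4) ^ j ≤ m j) :
    ∃ J : ℕ → ℕ, Tendsto J atTop atTop ∧ ∀ k i j, J k = j + i → m j ≤ 8 ^ i * m (J k) := by
  have htop : Tendsto (fun j => 8 ^ j * m j) atTop atTop := by
    refine tendsto_atTop_mono (f := fun j : ℕ => κ * 2 ^ j) (fun j => ?_)
      ((tendsto_pow_atTop_atTop_of_one_lt (by norm_num)).const_mul_atTop hκ)
    calc κ * 2 ^ j = 8 ^ j * (κ * (1 / 4) ^ j) := by
          rw [mul_left_comm, ← mul_pow]
          norm_num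
      _ ≤ _ := mul_le_mul_of_nonneg_left (hm j) (by positivity)
  choose J hJ hrecord using Filter.high_scores htop
  refine ⟨J, tendsto_atTop_mono hJ tendsto_id, fun k i j hj => ?_⟩
  rcases i.eq_zero_or_pos with rfl | hi0
  · rw [hj, pow_zero, one_mul, add_zero]
  have hle := (hrecord k j (by omega)).le
  rw [hj, pow_add, mul_assoc, ← hj] at hle
  exact le_of_mul_le_mul_left hle (by positivity)

/-- The scales are the radii `2⁻ʲ` at which the maximum of `N` over the ball of radius `2⁻ʲ`,
multiplied by `8ʲ`, exceeds all previous values. -/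
lemma exists_scales {E : Type*} [NormedAddCommGroup E] [NormedSpace ℝ E] [ProperSpace E]
    {N : E → ℝ} (hN : Continuous N) {κ : ℝ} (hκ : 0 < κ)
    (hlow : ∀ t ∈ Ioc (0 : ℝ) 1, ∃ v ∈ closedBall (0 : E) t, κ * t ^ 2 ≤ N v) :
    ∃ (ε : ℕ → ℝ) (v : ℕ → E), (∀ k, 0 < ε k) ∧ Tendsto ε atTop (𝓝 0) ∧
      (∀ k, v k ∈ closedBall 0 1 ∧ 0 < N (ε k • v k)) ∧
      ∀ R, ∃ C, ∀ᶠ k in atTop, ∀ η ∈ closedBall (0 : E) R, N (ε k • η) ≤ C * N (ε k • v k) := by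
  have hmax (j : ℕ) : ∃ v ∈ closedBall (0 : E) ((1 / 2) ^ j),
      ∀ w ∈ closedBall (0 : E) ((1 / 2) ^ j), N w ≤ N v :=
    (isCompact_closedBall _ _).exists_isMaxOn ⟨0, mem_closedBall_self (by positivity)⟩
      hN.continuousOn
  choose v hv hmax using hmax
  have hquad (j : ℕ) : κ * (1 / 4) ^ j ≤ N (v j) := by
    obtain ⟨w, hw, hle⟩ := hlow ((1 / 2) ^ j)
      ⟨by positivity, pow_le_one₀ (by norm_num) (by norm_num)⟩
    rw [← pow_mul, mul_comm j, pow_mul] at hle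
    norm_num at hle ⊢
    exact hle.trans (hmax j w (by norm_num at hw ⊢; exact hw))
  obtain ⟨J, hJ, hrecord⟩ := exists_tendsto_atTop_le_pow_mul hκ hquad
  have hinv (k : ℕ) : ((1 / 2 : ℝ) ^ J k) • (2 : ℝ) ^ J k • v (J k) = v (J k) := by
    rw [smul_smul, ← mul_pow]
    norm_num
  refine ⟨fun k => (1 / 2) ^ J k, fun k => (2 : ℝ) ^ J k • v (J k), fun k => by positivity,
    (tendsto_pow_atTop_nhds_zero_of_lt_one (by norm_num) (by norm_num)).comp hJ,
    fun k => ⟨?_, ?_⟩, fun R => ?_⟩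
  · have := mem_closedBall_zero_iff.1 (hv (J k))
    rw [mem_closedBall_zero_iff, norm_smul, norm_pow, Real.norm_ofNat]
    calc (2 : ℝ) ^ J k * ‖v (J k)‖ ≤ 2 ^ J k * (1 / 2) ^ J k := by gcongr
      _ = 1 := by rw [← mul_pow]; norm_num
  · rw [hinv]
    exact (by positivity : 0 < κ * (1 / 4) ^ J k).trans_le (hquad _)
  obtain ⟨i, hi⟩ := pow_unbounded_of_one_lt R (one_lt_two (α := ℝ))
  refine ⟨8 ^ i, ?_⟩
  filter_upwards [hJ.eventually_ge_atTop i] with k hk η hη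
  obtain ⟨j, hj⟩ := Nat.exists_eq_add_of_le' hk
  rw [hinv]
  refine (hmax j _ ?_).trans (hrecord k i j hj)
  rw [mem_closedBall_zero_iff] at hη ⊢
  rw [norm_smul, norm_pow, Real.norm_of_nonneg (by norm_num), hj]
  calc (1 / 2) ^ (j + i) * ‖η‖ ≤ (1 / 2) ^ (j + i) * 2 ^ i := by gcongr; exact hη.trans hi.le
    _ = (1 / 2) ^ j := by rw [pow_add, mul_assoc, ← mul_pow]; norm_num

end Scales

section Blowup

lemma IsSubgradient.rescale {E : Type*} [NormedAddCommGroup E] [InnerProductSpace ℝ E] {N : E → ℝ}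
    {v g : E} {ε c : ℝ} (hg : IsSubgradient N (ε • v) g) (hc : 0 < c) :
    IsSubgradient (fun w => N (ε • w) / c) v ((ε / c) • g) := by
  intro w
  have h := hg (ε • w)
  rw [← smul_sub, inner_smul_right] at h
  simp only [real_inner_smul_left]
  rw [div_mul_eq_mul_div, ← add_div]
  exact div_le_div_of_nonneg_right h hc.le

lemma exists_norm_eq_one_inner_eq_zero_of_one_lt_rank {E : Type*} [NormedAddCommGroup E]
    [InnerProductSpace ℝ E] (hrank : 1 < Module.rank ℝ E) (y : E) :
    ∃ e : E, ‖e‖ = 1 ∧ ⟪y, e⟫ = 0 := by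
  have hne : (Submodule.span ℝ {y})ᗮ ≠ ⊥ := by
    rw [Ne, Submodule.orthogonal_eq_bot_iff]
    intro htop
    rw [← rank_top, ← htop] at hrank
    exact hrank.not_ge ((rank_span_le _).trans_eq (Cardinal.mk_singleton y))
  obtain ⟨e, he, he0⟩ := (Submodule.ne_bot_iff _).1 hne
  refine ⟨‖e‖⁻¹ • e, norm_smul_inv_norm he0, ?_⟩
  rw [inner_smul_right, Submodule.mem_orthogonal_singleton_iff_inner_right.1 he, mul_zero]

variable {E : Type*} [NormedAddCommGroup E] [InnerProductSpace ℝ E]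

/-- The second-order remainder at `y` of the support function `h y = ⟪y, p y⟫`, namely
`h (y + v) - h y - ⟪p y, v⟫`. -/
def supportRemainder (p : E → E) (y v : E) : ℝ := ⟪y + v, p (y + v) - p y⟫

lemma inner_sub_apply_add (p : E → E) (y v z : E) :
    ⟪y + v, z - p (y + v)⟫ = ⟪y + v, z - p y⟫ - supportRemainder p y v := by
  rw [supportRemainder, ← inner_sub_right, sub_sub_sub_cancel_right]

lemma inner_apply_add_sub (p : E → E) (y v : E) :
    ⟪y, p (y + v) - p y⟫ = supportRemainder p y v - ⟪p (y + v) - p y, v⟫ := by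
  rw [supportRemainder, inner_add_left, real_inner_comm v, add_sub_cancel_right]

namespace IsSupportMap

variable {L : Set E} {p : E → E} (hp : IsSupportMap L p)
include hp

lemma supportRemainder_nonneg (y v : E) : 0 ≤ supportRemainder p y v :=
  hp.inner_apply_sub_apply_nonneg _ _

lemma isSubgradient_supportRemainder (y v : E) :
    IsSubgradient (supportRemainder p y) v (p (y + v) - p y) := by
  intro w
  have hcomm : ⟪p (y + v) - p y, w - v⟫ = ⟪y + w, p (y + v) - p y⟫ - ⟪y + v, p (y + v) - p y⟫ := by
    rw [← inner_sub_left, add_sub_add_left_eq_sub, real_inner_comm]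
  rw [hcomm, supportRemainder, supportRemainder, add_sub_cancel, ← sub_nonneg, ← inner_sub_right,
    sub_sub_sub_cancel_right]
  exact hp.inner_apply_sub_apply_nonneg _ _

lemma continuous_supportRemainder (hL : IsCompact L) (y : E) :
    Continuous (supportRemainder p y) := by
  refine Continuous.congr (f := fun v => ⟪y + v, p (y + v)⟫ - ⟪y + v, p y⟫) ?_
    fun v => (inner_sub_right ..).symm
  exact ((hp.continuous_inner_apply hL.isBounded).comp (continuous_const_add y)).sub (by fun_prop)

lemma mul_norm_sq_le_supportRemainder {y v : E} {ρ : ℝ} (hρ : 0 ≤ ρ) (hy : ‖y‖ = 1)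
    (hball : closedBall (p y - ρ • y) ρ ⊆ L) (hyv : ⟪y, v⟫ = 0) (hv : ‖v‖ ≤ 1) :
    ρ / 3 * ‖v‖ ^ 2 ≤ supportRemainder p y v := by
  have hsq : ‖y + v‖ ^ 2 = 1 + ‖v‖ ^ 2 := by
    rw [norm_add_sq_real, hy, hyv]
    ring
  have hge : 1 + ‖v‖ ^ 2 / 3 ≤ ‖y + v‖ := by
    refine le_of_sq_le_sq ?_ (norm_nonneg _)
    rw [hsq]
    nlinarith [pow_le_one₀ (n := 2) (norm_nonneg v) hv, sq_nonneg ‖v‖]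
  have hpos : 0 < ‖y + v‖ := by nlinarith [sq_nonneg ‖v‖]
  have hle := hp.inner_le (y + v) (p y - ρ • y + (ρ / ‖y + v‖) • (y + v)) (hball (by
    rw [mem_closedBall, dist_self_add_left, norm_smul, norm_div, norm_norm,
      div_mul_cancel₀ _ hpos.ne', Real.norm_of_nonneg hρ]))
  have hyy : ⟪y + v, y⟫ = 1 := by
    rw [inner_add_left, real_inner_self_eq_norm_sq, hy, real_inner_comm, hyv]
    norm_num
  have hnorm : ρ / ‖y + v‖ * ‖y + v‖ ^ 2 = ρ * ‖y + v‖ := by field_simp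
  rw [inner_add_right, inner_sub_right, inner_smul_right, inner_smul_right,
    real_inner_self_eq_norm_sq, hyy, hnorm] at hle
  rw [supportRemainder, inner_sub_right]
  nlinarith

lemma tendsto_supportRemainder_div {ι : Type*} {l : Filter ι} {ε : ι → ℝ} {w : ι → E} {y w₀ : E}
    (hL : IsCompact L) (hy : y ≠ 0) (hε : Tendsto ε l (𝓝 0)) (hw : Tendsto w l (𝓝 w₀)) :
    Tendsto (fun i => supportRemainder p y (ε i • w i) / ε i) l (𝓝 0) := by
  have hY : Tendsto (fun i => y + ε i • w i) l (𝓝 y) := by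
    simpa using (tendsto_const_nhds (x := y)).add (hε.smul hw)
  have hG : Tendsto (fun i => ‖p (y + ε i • w i) - p y‖ * ‖w i‖) l (𝓝 0) := by
    simpa using ((hp.tendsto hL hy hY).sub_const (p y)).norm.mul hw.norm
  refine squeeze_zero_norm (fun i => ?_) hG
  have hle := hp.isSubgradient_supportRemainder y (ε i • w i) 0
  rw [zero_sub, inner_neg_right, supportRemainder, supportRemainder, add_zero, sub_self,
    inner_zero_right, ← sub_eq_add_neg, sub_nonpos] at hle
  rw [norm_div, Real.norm_of_nonneg (hp.supportRemainder_nonneg _ _)]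
  refine div_le_of_le_mul₀ (norm_nonneg _) (by positivity) ?_
  calc _ ≤ ‖p (y + ε i • w i) - p y‖ * ‖ε i • w i‖ := hle.trans (real_inner_le_norm _ _)
    _ = _ := by rw [norm_smul]; ring

lemma exists_tendsto_rescaled_contact {ι : Type*} {l : Filter ι} {ε : ι → ℝ} {Z : ι → E}
    {y z η : E} (hL : IsCompact L) (hy : y ≠ 0) (hne : z - p y ≠ 0) (hε : ∀ i, 0 < ε i)
    (hε0 : Tendsto ε l (𝓝 0)) (hZ : Tendsto Z l (𝓝 z))
    (hyZ : ∀ᶠ i in l, ⟪y, Z i - p y⟫ = -(⟪η, z - p y⟫ * ε i)) :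
    ∃ x : ι → E, Tendsto x l (𝓝 η) ∧
      ∀ᶠ i in l, ⟪y + ε i • x i, Z i - p (y + ε i • x i)⟫ = 0 := by
  set f : ι → ℝ → ℝ := fun i s => ⟪η + s • (z - p y), Z i - p y⟫ - ⟪η, z - p y⟫ -
    supportRemainder p y (ε i • (η + s • (z - p y))) / ε i
  have hfactor : ∀ᶠ i in l, ∀ s, ⟪y + ε i • (η + s • (z - p y)),
      Z i - p (y + ε i • (η + s • (z - p y)))⟫ = ε i * f i s := hyZ.mono fun i hi s => by
    rw [inner_sub_apply_add, inner_add_left, hi, real_inner_smul_left]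
    simp only [f]
    field_simp [(hε i).ne']
    ring
  have hR := hp.continuous_supportRemainder hL y
  obtain ⟨s, hs0, hs⟩ := exists_tendsto_zero_eventually_eq_zero (l := l) one_pos (f := f)
    (f₀ := fun s => s * ‖z - p y‖ ^ 2) (fun i => by fun_prop)
    (fun s hs => mul_neg_of_neg_of_pos hs.2 (by positivity))
    (fun s hs => mul_pos hs.1 (by positivity)) fun s => by
      have hw : Tendsto (fun x : ι × ℝ => η + x.2 • (z - p y)) (l ×ˢ 𝓝 s)
        (𝓝 (η + s • (z - p y))) := (tendsto_snd.smul_const _).const_add _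
      have hlim :=
        ((hw.inner (𝕜 := ℝ) ((hZ.comp tendsto_fst).sub_const (p y))).sub_const ⟪η, z - p y⟫).sub
        (hp.tendsto_supportRemainder_div hL hy (hε0.comp tendsto_fst) hw)
      rwa [inner_add_left, real_inner_smul_left, real_inner_self_eq_norm_sq,
        add_sub_cancel_left, sub_zero] at hlim
  refine ⟨fun i => η + s i • (z - p y), ?_, ?_⟩
  · simpa using (hs0.smul_const (z - p y)).const_add η
  · filter_upwards [hfactor, hs] with i hi hsi
    rw [hi, hsi, mul_zero]

lemma exists_rescaled_limit [FiniteDimensional ℝ E] {y : E} {ρ : ℝ} (hrank : 1 < Module.rank ℝ E)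
    (hL : IsCompact L) (hy : ‖y‖ = 1) (hρ : 0 < ρ) (hball : closedBall (p y - ρ • y) ρ ⊆ L) :
    ∃ (U : Ultrafilter ℕ) (ε c : ℕ → ℝ) (N : E → ℝ), (∀ k, 0 < ε k) ∧ Tendsto ε U (𝓝 0) ∧
      N 0 = 0 ∧ (∀ η, 0 ≤ N η) ∧ (∃ η, N η ≠ 0) ∧
      ∀ (x : ℕ → E) (η : E), Tendsto x U (𝓝 η) → ∃ g, IsSubgradient N η g ∧ ⟪y, g⟫ = 0 ∧
        Tendsto (fun k => c k • (p (y + ε k • x k) - p y)) U (𝓝 g) := by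
  obtain ⟨e, he, hye⟩ := exists_norm_eq_one_inner_eq_zero_of_one_lt_rank hrank y
  have hnorm {t : ℝ} (ht : t ∈ Ioc (0 : ℝ) 1) : ‖t • e‖ = t := by
    rw [norm_smul, he, mul_one, Real.norm_of_nonneg ht.1.le]
  obtain ⟨ε, v, hε, hε0, hv, hgrowth⟩ := exists_scales (hp.continuous_supportRemainder hL y)
    (by positivity : 0 < ρ / 3) fun t ht => ⟨t • e, mem_closedBall_zero_iff.2 (hnorm ht).le, by
      have := hp.mul_norm_sq_le_supportRemainder hρ.le hy hball (v := t • e)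
        (by rw [inner_smul_right, hye, mul_zero]) ((hnorm ht).trans_le ht.2)
      rwa [hnorm ht] at this⟩
  set R := supportRemainder p y
  have hpos (k : ℕ) : 0 < R (ε k • v k) := (hv k).2
  have hU : (hyperfilter ℕ : Filter ℕ) ≤ atTop := Nat.hyperfilter_le_atTop
  obtain ⟨N, hN⟩ := exists_tendsto_ultrafilter_isSubgradient (U := hyperfilter ℕ)
    (N := fun k w => R (ε k • w) / R (ε k • v k))
    (fun k w => div_nonneg (hp.supportRemainder_nonneg _ _) (hpos k).le)
    (fun k w => (hp.isSubgradient_supportRemainder y (ε k • w)).rescale (hpos k))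
    fun B => (hgrowth B).imp fun C hC => hU <| hC.mono fun k hk w hw =>
      (div_le_iff₀ (hpos k)).2 (hk w hw)
  have hN' (η : E) := (hN _ η tendsto_const_nhds).1
  refine ⟨hyperfilter ℕ, ε, fun k => ε k / R (ε k • v k), N, hε, hε0.mono_left hU, ?_,
    fun η => ge_of_tendsto' (hN' η) fun k =>
      div_nonneg (hp.supportRemainder_nonneg _ _) (hpos k).le,
    ?_, fun x η hx => ?_⟩
  · exact tendsto_nhds_unique (hN' 0) (tendsto_const_nhds.congr fun k => by
      simp [R, supportRemainder])
  · obtain ⟨η, -, hη⟩ := (isCompact_closedBall (0 : E) 1).ultrafilter_le_nhds'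
      ((hyperfilter ℕ).map v) (Filter.mem_map.2 (univ_mem' fun k => (hv k).1))
    have hone := tendsto_nhds_unique (hN v η hη).1
      (tendsto_const_nhds.congr fun k => (div_self (hpos k).ne').symm)
    exact ⟨η, by rw [hone]; exact one_ne_zero⟩
  · obtain ⟨hNx, g, hg, hlim⟩ := hN x η hx
    refine ⟨g, hg, tendsto_nhds_unique ((tendsto_const_nhds (x := y)).inner hlim) ?_, hlim⟩
    have hzero := (hε0.mono_left hU).mul (hNx.sub (hlim.inner hx))
    rw [zero_mul] at hzero
    refine hzero.congr fun k => ?_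
    rw [inner_smul_right, inner_apply_add_sub, real_inner_smul_left, inner_smul_right]
    ring

end IsSupportMap

/-- A limit `N` of rescaled second-order remainders of the support function of `L` at `y`: a convex
function on which the planarity of the grazes from the points `z ∈ frontier K` of the support plane
with normal `y` leaves a trace. -/
structure IsBlowup (K : Set E) (p a : E → E) (y : E) (N : E → ℝ) : Prop where
  map_zero : N 0 = 0
  nonneg : ∀ η, 0 ≤ N η
  map_add_smul : ∀ η (s : ℝ), N (η + s • y) = N η
  sharesSubgradients : ∀ z ∈ frontier K, ⟪y, z - p y⟫ = 0 →
    SharesSubgradients N (a z) (z - p y)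

namespace HasPlanarGrazes

variable {K L : Set E} {p a : E → E} (h : HasPlanarGrazes K L p a)
include h

lemma exists_tendsto_frontier_inner_sub_eq {ι : Type*} {l : Filter ι} {δ : ι → ℝ} {y z : E}
    (hy : ‖y‖ = 1) (hz : z ∈ frontier K) (hyz : ⟪y, z - p y⟫ = 0) (hδ : Tendsto δ l (𝓝 0)) :
    ∃ Z : ι → E, (∀ᶠ i in l, Z i ∈ frontier K) ∧ Tendsto Z l (𝓝 z) ∧
      ∀ᶠ i in l, ⟪y, Z i - p y⟫ = δ i := by
  have hne := h.sub_apply_ne_zero hz y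
  have hq : Tendsto (fun i => p y + δ i • y) l (𝓝 (p y)) := by
    simpa using (hδ.smul_const y).const_add (p y)
  have hqint := hq.eventually (isOpen_interior.mem_nhds (h.apply_mem_interior y))
  set Z : ι → E := fun i => exitPoint K (p y + δ i • y) (z - p y)
  have hZ : Tendsto Z l (𝓝 z) := by
    simpa only [h.exitPoint_apply_sub hz] using
      h.tendsto_exitPoint (h.apply_mem_interior y) hne hq tendsto_const_nhds
  refine ⟨Z, hqint.mono fun i hi => h.exitPoint_mem_frontier hi hne, hZ, hqint.mono fun i hi => ?_⟩
  obtain ⟨t, -, ht⟩ := h.exists_exitPoint_sub_eq_smul hi hne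
  have hsplit : Z i - p y = t • (z - p y) + δ i • y := by
    rw [← ht]
    abel
  rw [hsplit, inner_add_right, inner_smul_right, inner_smul_right, hyz,
    real_inner_self_eq_norm_sq, hy]
  ring

lemma exists_isBlowup [FiniteDimensional ℝ E] {y : E} {ρ : ℝ} (hy : ‖y‖ = 1) (hρ : 0 < ρ)
    (hball : closedBall (p y - ρ • y) ρ ⊆ L) : ∃ N, IsBlowup K p a y N ∧ ∃ η, N η ≠ 0 := by
  have hy0 : y ≠ 0 := norm_ne_zero_iff.1 (by rw [hy]; norm_num)
  obtain ⟨U, ε, c, N, hε, hε0, hN0, hN, hne, hlim⟩ :=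
    h.isSupportMap.exists_rescaled_limit h.one_lt_rank h.isCompact_inner hy hρ hball
  have hsub (η : E) : ∃ g, IsSubgradient N η g ∧ ⟪y, g⟫ = 0 :=
    (hlim _ η tendsto_const_nhds).imp fun g hg => ⟨hg.1, hg.2.1⟩
  refine ⟨N, ⟨hN0, hN, fun η s => le_antisymm ?_ ?_, fun z hz hyz η η' hηη' => ?_⟩, hne⟩
  · obtain ⟨g, hg, hyg⟩ := hsub (η + s • y)
    have := hg η
    rwa [sub_add_cancel_left, inner_neg_right, inner_smul_right, real_inner_comm, hyg, mul_zero,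
      neg_zero, add_zero] at this
  · obtain ⟨g, hg, hyg⟩ := hsub η
    have := hg (η + s • y)
    rwa [add_sub_cancel_left, inner_smul_right, real_inner_comm, hyg, mul_zero, add_zero] at this
  have hne := h.sub_apply_ne_zero hz y
  obtain ⟨Z, hZK, hZ, hyZ⟩ := h.exists_tendsto_frontier_inner_sub_eq hy hz hyz
    (l := U) (δ := fun k => -(⟪η, z - p y⟫ * ε k)) (by simpa using (hε0.const_mul _).neg)
  obtain ⟨x, hx, hxc⟩ := h.isSupportMap.exists_tendsto_rescaled_contact h.isCompact_inner hy0 hne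
    hε hε0 hZ hyZ
  rw [inner_sub_left, sub_eq_zero] at hηη'
  obtain ⟨x', hx', hxc'⟩ := h.isSupportMap.exists_tendsto_rescaled_contact h.isCompact_inner hy0 hne
    hε hε0 hZ (η := η') (by rwa [← hηη'])
  obtain ⟨g, hg, -, hgl⟩ := hlim x η hx
  obtain ⟨g', hg', -, hgl'⟩ := hlim x' η' hx'
  refine ⟨g, g', hg, hg', tendsto_nhds_unique
    ((h.tendsto_normal hz hZK hZ).inner (𝕜 := ℝ) (hgl.sub hgl')) (tendsto_const_nhds.congr' ?_)⟩
  have hdir {w : ℕ → E} {w₀ : E} (hw : Tendsto w U (𝓝 w₀)) : ∀ᶠ i in U, y + ε i • w i ≠ 0 := by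
    have hY : Tendsto (fun i => y + ε i • w i) U (𝓝 y) := by
      simpa using (hε0.smul hw).const_add y
    exact hY.eventually_ne hy0
  filter_upwards [hZK, hxc, hxc', hdir hx, hdir hx'] with i hi hxi hxi' hne hne'
  rw [← smul_sub, sub_sub_sub_cancel_right, inner_smul_right,
    h.inner_normal_sub hi hne hne' hxi hxi', mul_zero]

end HasPlanarGrazes

end Blowup

section Quadratic

/-- The difference `F - G` oscillates on a short interval by at most its length times the growth of
the common subgradient, which sums to a telescope. -/
lemma sub_eq_sub_of_forall_exists_isSubgradient {F G : ℝ → ℝ}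
    (h : ∀ t, ∃ s, IsSubgradient F t s ∧ IsSubgradient G t s) (t : ℝ) :
    F t - G t = F 0 - G 0 := by
  choose s hF hG using h
  have hstep (x y : ℝ) : |(F y - G y) - (F x - G x)| ≤ (s y - s x) * (y - x) := by
    have hFx := hF x y
    have hFy := hF y x
    have hGx := hG x y
    have hGy := hG y x
    simp only [Real.inner_apply] at hFx hFy hGx hGy
    rw [abs_le]
    constructor <;> linarith
  have hsum (δ : ℝ) (i : ℕ) : |(F (i * δ) - G (i * δ)) - (F 0 - G 0)| ≤ (s (i * δ) - s 0) * δ := by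
    induction i with
    | zero => simp
    | succ i ih =>
      have hi := hstep (i * δ) ((i + 1 : ℕ) * δ)
      have hδ : ((i + 1 : ℕ) : ℝ) * δ - i * δ = δ := by
        push_cast
        ring
      rw [hδ] at hi
      linarith [abs_sub_le (F ((i + 1 : ℕ) * δ) - G ((i + 1 : ℕ) * δ)) (F (i * δ) - G (i * δ))
        (F 0 - G 0)]
  have hbound (n : ℕ) : |(F t - G t) - (F 0 - G 0)| ≤ (s t - s 0) * t * (1 / ((n : ℝ) + 1)) := by
    have hn := hsum (t / ((n + 1 : ℕ) : ℝ)) (n + 1)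
    rw [mul_div_cancel₀ _ (by positivity)] at hn
    exact hn.trans_eq (by push_cast; ring)
  have hlim := (tendsto_one_div_add_atTop_nhds_zero_nat (𝕜 := ℝ)).const_mul ((s t - s 0) * t)
  rw [mul_zero] at hlim
  exact sub_eq_zero.1 (abs_nonpos_iff.1 (ge_of_tendsto' hlim hbound))

lemma exists_eq_mul_sq {u : ℝ → ℝ} (hu : Continuous u) (hpos : ∀ t, 0 ≤ u t)
    (h : ∀ x σ τ, u (x + σ + τ) - u (x + σ) - u (x + τ) + u x = u (σ + τ) - u σ - u τ) :
    ∃ α, 0 ≤ α ∧ ∀ t, u t = α * t ^ 2 := by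
  have hlinear {f : ℝ → ℝ} (hf : Continuous f) (hadd : ∀ x y, f (x + y) = f x + f y) (x : ℝ) :
      f x = x * f 1 := by
    simpa using map_real_smul (AddMonoidHom.mk' f hadd) hf x 1
  set c := u (1 + 1) - u 1 - u 1
  have hpolar (σ τ : ℝ) : u (σ + τ) - u σ - u τ = σ * (u (1 + τ) - u 1 - u τ) :=
    hlinear (f := fun σ => u (σ + τ) - u σ - u τ) (by fun_prop)
      (fun x y => by linarith [h x y τ]) σ
  have hpolar_one (τ : ℝ) : u (1 + τ) - u 1 - u τ = τ * c := by
    have := hpolar τ 1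
    rw [add_comm τ 1] at this
    linarith
  have hquad (t : ℝ) : u t = c / 2 * t ^ 2 + (u 1 - c / 2) * t := by
    have := hlinear (f := fun t => u t - c / 2 * t ^ 2) (by fun_prop) (fun x y => by
      have := hpolar x y
      rw [hpolar_one] at this
      linarith) t
    linarith
  have hlin : u 1 - c / 2 = 0 := by
    have hdisc := discrim_le_zero (a := c / 2) (b := u 1 - c / 2) (c := 0) fun t => by
      linarith [hpos t, hquad t, sq t]
    rw [discrim] at hdisc
    nlinarith
  refine ⟨u 1, hpos 1, fun t => ?_⟩
  rw [hquad, hlin, ← sub_eq_zero.1 hlin]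
  ring

namespace SharesSubgradients

variable {E : Type*} [NormedAddCommGroup E] [InnerProductSpace ℝ E] {N : E → ℝ} {A Z : E}
  (h : SharesSubgradients N A Z)
include h

lemma map_add_smul_add_sub (η : E) {ζ : E} (hζ : ⟪ζ, Z⟫ = 0) (τ : ℝ) :
    N (η + τ • A + ζ) - N (η + τ • A) = N (η + ζ) - N η := by
  have hline {x g : E} {t : ℝ} (hg : IsSubgradient N (x + t • A) g) :
      IsSubgradient (fun t => N (x + t • A)) t ⟪A, g⟫ := fun t' => by
    have := hg (x + t' • A)
    rwa [add_sub_add_left_eq_sub, ← sub_smul, inner_smul_right, real_inner_comm] at this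
  have hsub := sub_eq_sub_of_forall_exists_isSubgradient (F := fun t => N (η + ζ + t • A))
    (G := fun t => N (η + t • A)) (fun t => by
      obtain ⟨g, g', hg, hg', heq⟩ := h (η + ζ + t • A) (η + t • A)
        (by rwa [add_sub_add_right_eq_sub, add_sub_cancel_left])
      rw [inner_sub_right, sub_eq_zero] at heq
      exact ⟨⟪A, g⟫, hline hg, heq ▸ hline hg'⟩) τ
  rw [add_right_comm]
  simpa using hsub

lemma map_eq_add (hN0 : N 0 = 0) (hAZ : ⟪A, Z⟫ = 1) (η : E) :
    N η = N (⟪η, Z⟫ • A) + N (η - ⟪η, Z⟫ • A) := by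
  have := h.map_add_smul_add_sub 0 (ζ := η - ⟪η, Z⟫ • A)
    (by rw [inner_sub_left, real_inner_smul_left, hAZ, mul_one, sub_self]) ⟪η, Z⟫
  rw [zero_add, zero_add, hN0, add_sub_cancel] at this
  linarith

lemma exists_map_smul_eq_mul_sq {B W f : E} (h' : SharesSubgradients N B W)
    (hcont : Continuous N) (hN0 : N 0 = 0) (hN : ∀ η, 0 ≤ N η) (hAZ : ⟪A, Z⟫ = 1)
    (hBZ : ⟪B, Z⟫ ≠ 0) (hfW : ⟪f, W⟫ = 0) (hfZ : ⟪f, Z⟫ ≠ 0) :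
    ∃ α, 0 ≤ α ∧ ∀ τ : ℝ, N (τ • A) = α * τ ^ 2 := by
  refine exists_eq_mul_sq (u := fun τ => N (τ • A)) (by fun_prop) (fun τ => hN _) ?_
  have hsplit (x : ℝ) (v : E) :
      N (x • A + v) = N ((x + ⟪v, Z⟫) • A) + N (v - ⟪v, Z⟫ • A) := by
    rw [h.map_eq_add hN0 hAZ (x • A + v), inner_add_left, real_inner_smul_left, hAZ, mul_one,
      add_smul, add_sub_add_left_eq_sub]
  have hdiff (x σ τ : ℝ) : N ((x + σ * ⟪B, Z⟫ + τ * ⟪f, Z⟫) • A) - N ((x + σ * ⟪B, Z⟫) • A)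
      - N ((x + τ * ⟪f, Z⟫) • A) + N (x • A) =
      -(N (σ • B + τ • f - ⟪σ • B + τ • f, Z⟫ • A) - N (σ • B - ⟪σ • B, Z⟫ • A)
        - N (τ • f - ⟪τ • f, Z⟫ • A)) := by
    have hswap := h'.map_add_smul_add_sub (x • A) (ζ := τ • f)
      (by rw [real_inner_smul_left, hfW, mul_zero]) σ
    rw [add_assoc, hsplit, hsplit x (σ • B), hsplit x (τ • f), inner_add_left,
      real_inner_smul_left, real_inner_smul_left, ← add_assoc] at hswap
    rw [inner_add_left, real_inner_smul_left, real_inner_smul_left]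
    linarith
  intro x σ τ
  have hx := hdiff x (σ / ⟪B, Z⟫) (τ / ⟪f, Z⟫)
  have h0 := hdiff 0 (σ / ⟪B, Z⟫) (τ / ⟪f, Z⟫)
  simp only [div_mul_cancel₀ _ hBZ, div_mul_cancel₀ _ hfZ, zero_add, zero_smul, hN0] at hx h0 ⊢
  linarith

end SharesSubgradients

lemma exists_eq_inner_smul_add_smul {y v w a u : E3} (hy : ‖y‖ = 1) (hw : w ≠ 0) (hyw : ⟪y, w⟫ = 0)
    (haw : ⟪a, w⟫ = 0) (hvw : ⟪v, w⟫ = 0) (hyu : ⟪y, u⟫ = 0) (hau : ⟪a, u⟫ = 1) :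
    ∃ s : ℝ, v = ⟪v, u⟫ • a + s • y := by
  have hyy : ⟪y, y⟫ = 1 := by rw [real_inner_self_eq_norm_sq, hy, one_pow]
  have hy0 : y ≠ 0 := inner_self_ne_zero.1 (hyy ▸ one_ne_zero)
  have hproj (x : E3) : ⟪y, x - ⟪y, x⟫ • y⟫ = 0 := by
    rw [inner_sub_right, inner_smul_right, hyy, mul_one, sub_self]
  have hprojw {x : E3} (hx : ⟪x, w⟫ = 0) : ⟪w, x - ⟪y, x⟫ • y⟫ = 0 := by
    rw [real_inner_comm, inner_sub_left, real_inner_smul_left, hx, hyw, mul_zero, sub_zero]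
  have hproju (x : E3) : ⟪x - ⟪y, x⟫ • y, u⟫ = ⟪x, u⟫ := by
    rw [inner_sub_left, real_inner_smul_left, hyu, mul_zero, sub_zero]
  obtain ⟨c, hc⟩ := exists_eq_smul_of_inner_eq_zero
    (linearIndependent_pair_of_inner_eq_zero hy0 hyw (inner_self_ne_zero.2 hw))
    (by
      intro h0
      simpa [h0, hau] using hproju a)
    (hproj a) (hprojw haw) (hproj v) (hprojw hvw)
  refine ⟨⟪y, v⟫ - c * ⟪y, a⟫, ?_⟩
  rw [← hproju v, hc, real_inner_smul_left, hproju, hau, mul_one, sub_smul, mul_smul]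
  rw [sub_eq_iff_eq_add] at hc
  nth_rw 1 [hc]
  module

lemma HasPlanarGrazes.exists_contact_sub_eq_smul {E : Type*} [NormedAddCommGroup E]
    [InnerProductSpace ℝ E] {K L : Set E} {p a : E → E} (h : HasPlanarGrazes K L p a) (y : E)
    {d : E} (hd : d ≠ 0) : ∃ z ∈ frontier K, ∃ t : ℝ, 0 < t ∧ z - p y = t • d :=
  ⟨exitPoint K (p y) d, h.exitPoint_mem_frontier (h.apply_mem_interior y) hd,
    h.exists_exitPoint_sub_eq_smul (h.apply_mem_interior y) hd⟩

lemma HasPlanarGrazes.tendsto_normal_exitPoint_add_smul {E : Type*} [NormedAddCommGroup E]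
    [InnerProductSpace ℝ E] [FiniteDimensional ℝ E] {K L : Set E} {p a : E → E}
    (h : HasPlanarGrazes K L p a) (y : E) {d : E} (hd : d ≠ 0) (w : E) :
    Tendsto (fun s : ℝ => d + s • w) (𝓝[≠] 0) (𝓝 d) ∧
      Tendsto (fun s : ℝ => a (exitPoint K (p y) (d + s • w))) (𝓝[≠] 0)
        (𝓝 (a (exitPoint K (p y) d))) := by
  have hdir : Tendsto (fun s : ℝ => d + s • w) (𝓝[≠] 0) (𝓝 d) := by
    have : Tendsto (fun s : ℝ => d + s • w) (𝓝 0) (𝓝 (d + (0 : ℝ) • w)) :=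
      Continuous.tendsto (by fun_prop) 0
    rw [zero_smul, add_zero] at this
    exact this.mono_left nhdsWithin_le_nhds
  have hint := h.apply_mem_interior y
  exact ⟨hdir, h.tendsto_normal (h.exitPoint_mem_frontier hint hd)
    ((hdir.eventually_ne hd).mono fun s hs => h.exitPoint_mem_frontier hint hs)
    (h.tendsto_exitPoint hint hd tendsto_const_nhds hdir)⟩

namespace IsBlowup

variable {K L : Set E3} {p a : E3 → E3} {N : E3 → ℝ} {y z : E3}

lemma continuous (h : HasPlanarGrazes K L p a) (hN : IsBlowup K p a y N) : Continuous N := by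
  obtain ⟨d, hd, hyd, -⟩ := exists_norm_eq_one_inner_eq_zero y y
  obtain ⟨z, hz, t, -, ht⟩ := h.exists_contact_sub_eq_smul y (norm_ne_zero_iff.1 (hd ▸ one_ne_zero))
  refine continuousOn_univ.1 ((convexOn_of_forall_exists_isSubgradient fun η => ?_).continuousOn
    isOpen_univ)
  obtain ⟨g, -, hg, -⟩ := hN.sharesSubgradients z hz
    (by rw [ht, inner_smul_right, hyd, mul_zero]) η η (by rw [sub_self, inner_zero_left])
  exact ⟨g, hg⟩

lemma exists_map_smul_normal (h : HasPlanarGrazes K L p a) (hN : IsBlowup K p a y N) (hy : y ≠ 0)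
    (hz : z ∈ frontier K) (hyz : ⟪y, z - p y⟫ = 0) :
    ∃ α, 0 ≤ α ∧ ∀ τ : ℝ, N (τ • a z) = α * τ ^ 2 := by
  set Z := z - p y
  have hZ : Z ≠ 0 := h.sub_apply_ne_zero hz y
  obtain ⟨w, hw, hyw, hZw⟩ := exists_norm_eq_one_inner_eq_zero y Z
  have hint := h.apply_mem_interior y
  obtain ⟨hdir, hnormal⟩ := h.tendsto_normal_exitPoint_add_smul y hZ w
  have hdir0 := hdir.eventually_ne hZ
  rw [h.exitPoint_apply_sub hz] at hnormal
  replace hnormal := hnormal.inner (𝕜 := ℝ) (tendsto_const_nhds (x := Z))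
  rw [h.inner_normal_eq_one z hz y hy hyz] at hnormal
  obtain ⟨s, ⟨hs, hs'⟩, hs0⟩ :=
    ((hdir0.and (hnormal.eventually_ne one_ne_zero)).and self_mem_nhdsWithin).exists
  obtain ⟨t, -, ht⟩ := h.exists_exitPoint_sub_eq_smul hint hs
  refine (hN.sharesSubgradients z hz hyz).exists_map_smul_eq_mul_sq (f := s • Z - ⟪Z, Z⟫ • w)
    (hN.sharesSubgradients _ (h.exitPoint_mem_frontier hint hs) ?_)
    (hN.continuous h) hN.map_zero hN.nonneg (h.inner_normal_eq_one z hz y hy hyz) hs' ?_ ?_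
  · rw [ht, inner_smul_right, inner_add_right, inner_smul_right, hyz, hyw]
    ring
  · rw [ht, inner_smul_right, inner_sub_left, real_inner_smul_left, real_inner_smul_left,
      inner_add_right, inner_add_right, inner_smul_right, inner_smul_right, hZw,
      real_inner_comm Z w, hZw, real_inner_self_eq_norm_sq w, hw]
    ring
  · rw [inner_sub_left, real_inner_smul_left, real_inner_smul_left, real_inner_comm Z w, hZw,
      mul_zero, sub_zero]
    exact mul_ne_zero hs0 (inner_self_ne_zero.2 hZ)

/-- Two contacts `z, z'` with `⟪a z, z' - p y⟫ = 0` split `N` into squares. -/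
lemma exists_isPositive (h : HasPlanarGrazes K L p a) (hN : IsBlowup K p a y N) (hy : ‖y‖ = 1) :
    ∃ R : E3 →L[ℝ] E3, R.IsPositive ∧ ∀ η, N η = ⟪R η, η⟫ := by
  have hy0 : y ≠ 0 := norm_ne_zero_iff.1 (hy ▸ one_ne_zero)
  obtain ⟨d, hd, hyd, -⟩ := exists_norm_eq_one_inner_eq_zero y y
  obtain ⟨z, hz, t, -, hzt⟩ :=
    h.exists_contact_sub_eq_smul y (norm_ne_zero_iff.1 (hd ▸ one_ne_zero))
  obtain ⟨d', hd', hyd', had'⟩ := exists_norm_eq_one_inner_eq_zero y (a z)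
  obtain ⟨z', hz', t', -, hzt'⟩ :=
    h.exists_contact_sub_eq_smul y (norm_ne_zero_iff.1 (hd' ▸ one_ne_zero))
  have hyz : ⟪y, z - p y⟫ = 0 := by rw [hzt, inner_smul_right, hyd, mul_zero]
  have hyz' : ⟪y, z' - p y⟫ = 0 := by rw [hzt', inner_smul_right, hyd', mul_zero]
  obtain ⟨α, hα, hNα⟩ := hN.exists_map_smul_normal h hy0 hz hyz
  obtain ⟨β, hβ, hNβ⟩ := hN.exists_map_smul_normal h hy0 hz' hyz'
  have haz := h.inner_normal_eq_one z hz y hy0 hyz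
  have haz' := h.inner_normal_eq_one z' hz' y hy0 hyz'
  have hsplit := (hN.sharesSubgradients z hz hyz).map_eq_add hN.map_zero haz
  have hsplit' := (hN.sharesSubgradients z' hz' hyz').map_eq_add hN.map_zero haz'
  have horth : ⟪a z, z' - p y⟫ = 0 := by rw [hzt', inner_smul_right, had', mul_zero]
  have hZ' := h.sub_apply_ne_zero hz' y
  set Z := z - p y
  set Z' := z' - p y
  have hmultiple (ζ : E3) (hζ : ⟪ζ, Z'⟫ = 0) : N ζ = α * ⟪ζ, Z⟫ ^ 2 := by
    obtain ⟨s, hs⟩ := exists_eq_inner_smul_add_smul hy hZ' hyz' horth hζ hyz haz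
    rw [← hNα, ← hN.map_add_smul (⟪ζ, Z⟫ • a z) s, ← hs]
  refine ⟨(α : ℝ) • InnerProductSpace.rankOne ℝ Z Z +
    (β + α * ⟪a z', Z⟫ ^ 2) • InnerProductSpace.rankOne ℝ Z' Z',
    .add (.smul_of_nonneg (InnerProductSpace.isPositive_rankOne_self _) hα)
      (.smul_of_nonneg (InnerProductSpace.isPositive_rankOne_self _) (by positivity)), fun η => ?_⟩
  have hη : ⟪η - ⟪η, Z⟫ • a z, Z'⟫ = ⟪η, Z'⟫ := by
    rw [inner_sub_left, real_inner_smul_left, horth, mul_zero, sub_zero]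
  rw [hsplit, hNα, hsplit', hη, hNβ, hmultiple _ (by
      rw [inner_sub_left, hη, real_inner_smul_left, haz', mul_one, sub_self])]
  simp only [inner_sub_left, real_inner_smul_left, haz, add_apply, smul_apply,
    InnerProductSpace.rankOne_apply, inner_add_left, real_inner_comm η Z, real_inner_comm η Z']
  ring

end IsBlowup

end Quadratic

section Conjugation

/-- A positive semidefinite `R` with kernel containing `y` that sends the normal `a z` of every
contact `z` in the supporting plane at `p y` to a multiple of `z - p y`: on that plane, `z - p y`
and the trace of the plane `⟪a z, ·⟫ = 0` are conjugate with respect to `R`. -/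
structure IsNormalConjugation {E : Type*} [NormedAddCommGroup E] [InnerProductSpace ℝ E]
    (K : Set E) (p a : E → E) (y : E) (R : E →L[ℝ] E) : Prop where
  isPositive : R.IsPositive
  apply_self : R y = 0
  apply_normal : ∀ z ∈ frontier K, ⟪y, z - p y⟫ = 0 →
    R (a z) = ⟪R (a z), a z⟫ • (z - p y)

lemma IsBlowup.exists_isNormalConjugation {K L : Set E3} {p a : E3 → E3} {N : E3 → ℝ} {y : E3}
    (h : HasPlanarGrazes K L p a) (hN : IsBlowup K p a y N) (hN0 : ∃ η, N η ≠ 0) (hy : ‖y‖ = 1) :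
    ∃ R, R ≠ 0 ∧ IsNormalConjugation K p a y R := by
  obtain ⟨R, hR, hNR⟩ := hN.exists_isPositive h hy
  have hNadd (u v : E3) : N (u + v) = N u + 2 * ⟪R u, v⟫ + N v := by
    rw [hNR, hNR, hNR, map_add, inner_add_left, inner_add_right, inner_add_right,
      hR.inner_left_eq_inner_right v u, real_inner_comm v]
    ring
  refine ⟨R, ?_, hR, ?_, fun z hz hyz => ?_⟩
  · rintro rfl
    obtain ⟨η, hη⟩ := hN0
    exact hη (by rw [hNR, zero_apply, inner_zero_left])
  · refine ext_inner_right ℝ fun η => ?_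
    have hNη := hNadd η y
    have hN0 := hN.map_add_smul 0 1
    have hNη' := hN.map_add_smul η 1
    rw [one_smul, zero_add, hN.map_zero] at hN0
    rw [one_smul] at hNη'
    rw [inner_zero_left, hR.inner_left_eq_inner_right, real_inner_comm]
    linarith
  · have horth (ζ : E3) (hζ : ⟪ζ, z - p y⟫ = 0) : ⟪R (a z), ζ⟫ = 0 := by
      have := (hN.sharesSubgradients z hz hyz).map_add_smul_add_sub 0 hζ 1
      rw [one_smul, zero_add, zero_add, hNadd, hN.map_zero] at this
      linarith
    refine ext_inner_right ℝ fun v => ?_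
    have hv := horth (v - ⟪v, z - p y⟫ • a z) (by
      rw [inner_sub_left, real_inner_smul_left, h.inner_normal_eq_one z hz y
        (norm_ne_zero_iff.1 (hy ▸ one_ne_zero)) hyz, mul_one, sub_self])
    rw [inner_sub_right, inner_smul_right, sub_eq_zero] at hv
    rw [hv, real_inner_smul_left, real_inner_comm v, mul_comm]

/-- Take the largest ball about `c` inside `L`. -/
lemma IsSupportMap.exists_closedBall_subset {E : Type*} [NormedAddCommGroup E]
    [InnerProductSpace ℝ E] [FiniteDimensional ℝ E] {L : Set E} {p : E → E} {c : E}
    (hp : IsSupportMap L p) (hL : IsCompact L) (hLconv : Convex ℝ L) (hc : c ∈ interior L)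
    (hLn : L ≠ univ) :
    ∃ y ρ, ‖y‖ = 1 ∧ 0 < ρ ∧ closedBall (p y - ρ • y) ρ ⊆ L ∧
      ∀ q ∈ frontier L, dist (p y) c ≤ dist q c := by
  set ρ := infDist c Lᶜ
  obtain ⟨q, hq, hqρ⟩ := exists_mem_frontier_infDist_compl_eq_dist (interior_subset hc) hLn
  obtain ⟨y, hy, rfl⟩ := hp.exists_norm_eq_one_apply_eq hL.isClosed hLconv ⟨c, hc⟩ hq
  have hρ : 0 < ρ := by
    rw [show ρ = _ from hqρ, dist_pos]
    rintro rfl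
    exact hq.2 hc
  have hball : closedBall c ρ ⊆ L := by
    rw [← closure_ball c hρ.ne']
    exact hL.isClosed.closure_subset_iff.2 ball_infDist_compl_subset
  have hnorm : ‖p y - c‖ = ρ := by rw [← dist_eq_norm, dist_comm, ← hqρ]
  have hradius : p y - c = ρ • y := by
    have hle := hp.inner_le y (c + ρ • y) (hball (by
      rw [mem_closedBall, dist_self_add_left, norm_smul, hy, mul_one, Real.norm_of_nonneg hρ.le]))
    have heq : ⟪y, p y - c⟫ = ‖y‖ * ‖p y - c‖ := by
      refine (real_inner_le_norm _ _).antisymm ?_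
      rw [hy, one_mul, hnorm]
      rw [inner_add_right, inner_smul_right, real_inner_self_eq_norm_sq, hy] at hle
      rw [inner_sub_right]
      linarith
    rw [inner_eq_norm_mul_iff_real, hnorm, hy, one_smul] at heq
    exact heq.symm
  refine ⟨y, ρ, hy, hρ, ?_, fun q hq => ?_⟩
  · rwa [← hradius, sub_sub_cancel]
  · rw [dist_eq_norm, hnorm, dist_comm, show ρ = _ from infDist_closure.symm]
    exact infDist_le_dist_of_mem (frontier_compl L ▸ hq).1

namespace IsNormalConjugation

variable {E : Type*} [NormedAddCommGroup E] [InnerProductSpace ℝ E] {K L : Set E} {p a : E → E}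

lemma smul {y : E} {R : E →L[ℝ] E} (hR : IsNormalConjugation K p a y R) {t : ℝ} (ht : 0 ≤ t) :
    IsNormalConjugation K p a y (t • R) where
  isPositive := hR.isPositive.smul_of_nonneg ht
  apply_self := by rw [smul_apply, hR.apply_self, smul_zero]
  apply_normal z hz hyz := by
    rw [smul_apply, real_inner_smul_left, mul_smul, ← hR.apply_normal z hz hyz]

lemma apply_normal_eq_zero {y k z : E} {R : E →L[ℝ] E} (hR : IsNormalConjugation K p a y R)
    (hk : R k = 0) (hz : z ∈ frontier K) (hyz : ⟪y, z - p y⟫ = 0) (hkz : ⟪k, z - p y⟫ ≠ 0) :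
    R (a z) = 0 := by
  have hmul := congrArg (⟪k, ·⟫) (hR.apply_normal z hz hyz)
  simp only [inner_smul_right] at hmul
  rw [← hR.isPositive.inner_left_eq_inner_right, hk, inner_zero_left] at hmul
  rw [hR.apply_normal z hz hyz, (mul_eq_zero.1 hmul.symm).resolve_right hkz, zero_smul]

lemma of_tendsto [FiniteDimensional ℝ E] (h : HasPlanarGrazes K L p a) {ι : Type*} {l : Filter ι}
    [NeBot l] {Y : ι → E} {Q : ι → E →L[ℝ] E} {y : E} {R : E →L[ℝ] E}
    (hQ : ∀ᶠ i in l, ‖Y i‖ = 1 ∧ IsNormalConjugation K p a (Y i) (Q i)) (hy : y ≠ 0)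
    (hY : Tendsto Y l (𝓝 y)) (hR : Tendsto Q l (𝓝 R)) : IsNormalConjugation K p a y R := by
  have happly {V : ι → E} {v : E} (hV : Tendsto V l (𝓝 v)) :
      Tendsto (fun i => Q i (V i)) l (𝓝 (R v)) :=
    (isBoundedBilinearMap_apply.continuous.tendsto (R, v)).comp (hR.prodMk_nhds hV)
  refine ⟨(ContinuousLinearMap.isPositive_iff R).2 ⟨fun u v => ?_, fun u => ?_⟩, ?_,
    fun z hz hyz => ?_⟩
  · exact tendsto_nhds_unique_of_eventuallyEq ((happly tendsto_const_nhds).inner tendsto_const_nhds)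
      (tendsto_const_nhds.inner (happly tendsto_const_nhds))
      (hQ.mono fun i hi => hi.2.isPositive.inner_left_eq_inner_right u v)
  · exact ge_of_tendsto ((happly tendsto_const_nhds).inner tendsto_const_nhds)
      (hQ.mono fun i hi => hi.2.isPositive.inner_nonneg_left u)
  · exact tendsto_nhds_unique_of_eventuallyEq (happly hY) tendsto_const_nhds
      (hQ.mono fun i hi => hi.2.apply_self)
  · set Z := z - p y
    have hZ : Z ≠ 0 := h.sub_apply_ne_zero hz y
    set d : ι → E := fun i => Z - ⟪Y i, Z⟫ • Y i
    have hd : Tendsto d l (𝓝 Z) := by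
      have := (tendsto_const_nhds (x := Z)).sub
        ((hY.inner (𝕜 := ℝ) (tendsto_const_nhds (x := Z))).smul hY)
      rwa [hyz, zero_smul, sub_zero] at this
    have hpY := h.isSupportMap.tendsto h.isCompact_inner hy hY
    have hexit := h.tendsto_exitPoint (h.apply_mem_interior y) hZ hpY hd
    rw [h.exitPoint_apply_sub hz] at hexit
    have hd0 := hd.eventually_ne hZ
    have hnormal := h.tendsto_normal hz
      (hd0.mono fun i hi => h.exitPoint_mem_frontier (h.apply_mem_interior (Y i)) hi) hexit
    refine tendsto_nhds_unique_of_eventuallyEq (happly hnormal)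
      (((happly hnormal).inner hnormal).smul (hexit.sub hpY)) ?_
    filter_upwards [hQ, hd0] with i ⟨hYi, hQi⟩ hdi
    refine hQi.apply_normal _ (h.exitPoint_mem_frontier (h.apply_mem_interior (Y i)) hdi) ?_
    obtain ⟨t, -, ht⟩ := h.exists_exitPoint_sub_eq_smul (h.apply_mem_interior (Y i)) hdi
    rw [ht, inner_smul_right, inner_sub_right, inner_smul_right, real_inner_self_eq_norm_sq, hYi]
    ring

end IsNormalConjugation

/-- Boundary points of `L` touched by a ball inside `L` are dense in the boundary. -/
lemma HasPlanarGrazes.exists_isNormalConjugation {K L : Set E3} {p a : E3 → E3} {y : E3}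
    (h : HasPlanarGrazes K L p a) (hy : ‖y‖ = 1) :
    ∃ R, R ≠ 0 ∧ IsNormalConjugation K p a y R := by
  have happrox (c : E3) (hc : c ∈ interior L) : ∃ y' R, ‖y'‖ = 1 ∧ ‖R‖ = 1 ∧
      IsNormalConjugation K p a y' R ∧ dist (p y') c ≤ dist (p y) c := by
    obtain ⟨y', ρ, hy', hρ, hball, hmin⟩ := h.isSupportMap.exists_closedBall_subset
      h.isCompact_inner h.convex_inner hc h.isCompact_inner.ne_univ
    obtain ⟨N, hN, hN0⟩ := h.exists_isBlowup hy' hρ hball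
    obtain ⟨R, hR0, hR⟩ := hN.exists_isNormalConjugation h hN0 hy'
    exact ⟨y', ‖R‖⁻¹ • R, hy', norm_smul_inv_norm hR0, hR.smul (by positivity),
      hmin _ (h.isSupportMap.apply_mem_frontier (norm_ne_zero_iff.1 (hy ▸ one_ne_zero)))⟩
  choose! Y Q hY hQ hYQ hdist using happrox
  have hpy : p y ∈ closure (interior L) := by
    rw [h.convex_inner.closure_interior_eq_closure_of_nonempty_interior h.nonempty_interior]
    exact subset_closure (h.isSupportMap.mem y)
  have := mem_closure_iff_nhdsWithin_neBot.1 hpy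
  obtain ⟨U, hU⟩ := Ultrafilter.exists_le (𝓝[interior L] (p y))
  have hmem : ∀ᶠ c in (U : Filter E3), c ∈ interior L := hU self_mem_nhdsWithin
  have hcU : Tendsto id (U : Filter E3) (𝓝 (p y)) := hU.trans nhdsWithin_le_nhds
  obtain ⟨y', hy', hYU⟩ := (isCompact_sphere (0 : E3) 1).ultrafilter_le_nhds' (U.map Y)
    (Filter.mem_map.2 (hmem.mono fun c hc => mem_sphere_zero_iff_norm.2 (hY c hc)))
  obtain ⟨R, hR, hQU⟩ := (isCompact_sphere (0 : E3 →L[ℝ] E3) 1).ultrafilter_le_nhds' (U.map Q)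
    (Filter.mem_map.2 (hmem.mono fun c hc => mem_sphere_zero_iff_norm.2 (hQ c hc)))
  rw [mem_sphere_zero_iff_norm] at hy' hR
  have hy0 : y' ≠ 0 := norm_ne_zero_iff.1 (hy' ▸ one_ne_zero)
  have hYpy : Tendsto (fun c => p (Y c)) U (𝓝 (p y)) := by
    have hdist0 := (tendsto_const_nhds (x := p y)).dist hcU
    rw [dist_self] at hdist0
    refine tendsto_iff_dist_tendsto_zero.2 (squeeze_zero' (Eventually.of_forall fun _ =>
      dist_nonneg) (hmem.mono fun c hc => (dist_triangle_right _ _ c).trans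
        (add_le_add_left (hdist c hc) _)) ?_)
    simpa only [add_zero, id] using hdist0.add hdist0
  have heq : y' = y := h.eq_of_apply_eq hy' hy
    (tendsto_nhds_unique (h.isSupportMap.tendsto h.isCompact_inner hy0 hYU) hYpy)
  subst heq
  exact ⟨R, norm_ne_zero_iff.1 (hR ▸ one_ne_zero), .of_tendsto h
    (hmem.mono fun c hc => ⟨hY c hc, hYQ c hc⟩) hy0 hYU hQU⟩

lemma eq_zero_of_isPositive_of_inner_eq_zero {E : Type*} [NormedAddCommGroup E]
    [InnerProductSpace ℝ E] {R : E →ₗ[ℝ] E} (hR : R.IsPositive) {w : E} (hw : ⟪R w, w⟫ = 0) :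
    R w = 0 := by
  have hle := LinearMap.BilinForm.apply_mul_apply_le_of_forall_zero_le ((innerₗ E).comp R)
    hR.inner_nonneg_left w (R w)
  change ⟪R w, R w⟫ * ⟪R (R w), w⟫ ≤ ⟪R w, w⟫ * ⟪R (R w), R w⟫ at hle
  rw [hw, zero_mul, hR.isSymmetric (R w) w] at hle
  exact inner_self_eq_zero.1 (mul_self_eq_zero.1 (hle.antisymm (mul_self_nonneg _)))

lemma IsNormalConjugation.eq_zero_of_apply_eq_zero {K L : Set E3} {p a : E3 → E3} {y k : E3}
    {R : E3 →L[ℝ] E3} (h : HasPlanarGrazes K L p a) (hR : IsNormalConjugation K p a y R)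
    (hR0 : R ≠ 0) (hy : y ≠ 0) (hyk : ⟪y, k⟫ = 0) (hRk : R k = 0) : k = 0 := by
  by_contra hk
  obtain ⟨e, he, hye, hke⟩ := exists_norm_eq_one_inner_eq_zero y k
  have he0 : e ≠ 0 := norm_ne_zero_iff.1 (he ▸ one_ne_zero)
  obtain ⟨x, hx⟩ := DFunLike.ne_iff.1 hR0
  obtain ⟨c, hc⟩ := exists_eq_smul_of_inner_eq_zero (v := R x)
    (linearIndependent_pair_of_inner_eq_zero hy hyk (inner_self_ne_zero.2 hk)) he0 hye hke
    (by rw [← hR.isPositive.inner_left_eq_inner_right, hR.apply_self, inner_zero_left])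
    (by rw [← hR.isPositive.inner_left_eq_inner_right, hRk, inner_zero_left])
  have hnormal {z : E3} (hz : z ∈ frontier K) (hyz : ⟪y, z - p y⟫ = 0) (hkz : ⟪k, z - p y⟫ ≠ 0) :
      ⟪a z, e⟫ = 0 := by
    have hRx : ⟪a z, R x⟫ = 0 := by
      rw [← hR.isPositive.inner_left_eq_inner_right,
        hR.apply_normal_eq_zero hRk hz hyz hkz, inner_zero_left]
    rw [hc, inner_smul_right, mul_eq_zero] at hRx
    refine hRx.resolve_left ?_
    rintro rfl
    exact hx (hc.trans (zero_smul ℝ e))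
  obtain ⟨hdir, hlim⟩ := h.tendsto_normal_exitPoint_add_smul y he0 k
  replace hlim := hlim.inner (𝕜 := ℝ) (tendsto_const_nhds (x := e))
  have hint := h.apply_mem_interior y
  obtain ⟨t, -, ht⟩ := h.exists_exitPoint_sub_eq_smul hint he0
  have hone := h.inner_normal_eq_one _ (h.exitPoint_mem_frontier hint he0) y hy
    (by rw [ht, inner_smul_right, hye, mul_zero])
  rw [ht, inner_smul_right, tendsto_nhds_unique_of_eventuallyEq hlim tendsto_const_nhds ?_,
    mul_zero] at hone
  · exact zero_ne_one hone
  filter_upwards [hdir.eventually_ne he0, self_mem_nhdsWithin] with s hs hs0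
  obtain ⟨t, ht, hts⟩ := h.exists_exitPoint_sub_eq_smul hint hs
  refine hnormal (h.exitPoint_mem_frontier hint hs) ?_ ?_ <;>
    rw [hts, inner_smul_right, inner_add_right, inner_smul_right]
  · rw [hye, hyk, mul_zero, add_zero, mul_zero]
  · rw [hke, zero_add]
    exact mul_ne_zero ht.ne' (mul_ne_zero hs0 (inner_self_ne_zero.2 hk))

/-- A positive definite form `⟪M ·, ·⟫` for which `z - p y` and the plane `⟪a z, ·⟫ = 0` are
conjugate inside the plane orthogonal to `y`, for every contact `z` in the supporting plane at
`p y`. -/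
structure IsContactConjugation {E : Type*} [NormedAddCommGroup E] [InnerProductSpace ℝ E]
    (K : Set E) (p a : E → E) (y : E) (M : E ≃ₗ[ℝ] E) : Prop where
  isPositive : M.IsPositive
  inner_apply_sub : ∀ z ∈ frontier K, ⟪y, z - p y⟫ = 0 → ∀ d, ⟪y, d⟫ = 0 →
    ⟪M (z - p y), d⟫ = ⟪M (z - p y), z - p y⟫ * ⟪a z, d⟫

lemma IsContactConjugation.inner_self_pos {E : Type*} [NormedAddCommGroup E]
    [InnerProductSpace ℝ E] {K : Set E} {p a : E → E} {y u : E} {M : E ≃ₗ[ℝ] E}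
    (hM : IsContactConjugation K p a y M) (hu : u ≠ 0) : 0 < ⟪M u, u⟫ :=
  (hM.isPositive.inner_nonneg_left u).lt_of_ne' fun h0 =>
    hu (M.map_eq_zero_iff.1 (eq_zero_of_isPositive_of_inner_eq_zero hM.isPositive h0))

/-- Invert `R` on the plane orthogonal to `y`. -/
lemma HasPlanarGrazes.exists_isContactConjugation {K L : Set E3} {p a : E3 → E3} {y : E3}
    (h : HasPlanarGrazes K L p a) (hy : ‖y‖ = 1) : ∃ M, IsContactConjugation K p a y M := by
  have hy0 : y ≠ 0 := norm_ne_zero_iff.1 (hy ▸ one_ne_zero)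
  obtain ⟨R, hR0, hR⟩ := h.exists_isNormalConjugation hy
  set S : E3 →L[ℝ] E3 := R + InnerProductSpace.rankOne ℝ y y
  have hS (w : E3) : S w = R w + ⟪y, w⟫ • y := rfl
  have hSpos : S.IsPositive := hR.isPositive.add (InnerProductSpace.isPositive_rankOne_self y)
  have hker (w : E3) (hw : S w = 0) : w = 0 := by
    have hsum : ⟪R w, w⟫ + ⟪y, w⟫ * ⟪y, w⟫ = 0 := by
      rw [← real_inner_smul_left, ← inner_add_left, ← hS, hw, inner_zero_left]
    have hRw := hR.isPositive.inner_nonneg_left w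
    have hyw := mul_self_nonneg ⟪y, w⟫
    exact hR.eq_zero_of_apply_eq_zero h hR0 hy0 (mul_self_eq_zero.1 (by linarith))
      (eq_zero_of_isPositive_of_inner_eq_zero hR.isPositive.toLinearMap (by
        change ⟪R w, w⟫ = 0
        linarith))
  set T := LinearEquiv.ofInjectiveEndo (S : E3 →ₗ[ℝ] E3)
    (LinearMap.ker_eq_bot.1 (LinearMap.ker_eq_bot'.2 hker))
  have hT (w : E3) : T w = S w := rfl
  have hTpos : T.symm.IsPositive := LinearEquiv.isPositive_symm_iff.2 hSpos.toLinearMap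
  have hTsymm (u v : E3) : ⟪T.symm u, v⟫ = ⟪u, T.symm v⟫ := hTpos.isSymmetric u v
  have hTy : T.symm y = y := by
    rw [LinearEquiv.symm_apply_eq, hT, hS, hR.apply_self, real_inner_self_eq_norm_sq, hy]
    simp
  refine ⟨T.symm, hTpos, fun z hz hyz => ?_⟩
  set κ := ⟪R (a z), a z⟫
  have hRa : R (a z) = κ • (z - p y) := hR.apply_normal z hz hyz
  have hnormal (d : E3) (hd : ⟪y, d⟫ = 0) : ⟪a z, d⟫ = κ * ⟪T.symm (z - p y), d⟫ := by
    rw [← T.apply_symm_apply d, hT, ← hSpos.inner_left_eq_inner_right, hS, hRa, inner_add_left,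
      real_inner_smul_left, real_inner_smul_left, ← hTsymm y, hTy, hd, mul_zero, add_zero, ← hT,
      T.apply_symm_apply, hTsymm]
  intro d hd
  have hone := hnormal _ hyz
  rw [h.inner_normal_eq_one z hz y hy0 hyz] at hone
  rw [hnormal d hd]
  linear_combination -⟪T.symm (z - p y), d⟫ * (-hone)

end Conjugation

section Gluing

open LinearMap (BilinForm)

variable {W : Type*} [AddCommGroup W] [Module ℝ W]

/-- `B` is a positive multiple of `b` as a bilinear form on the subspace `V`. -/
def IsPosMultipleOn (V : Submodule ℝ W) (B b : BilinForm ℝ W) : Prop :=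
  ∃ k : ℝ, 0 < k ∧ ∀ u ∈ V, ∀ v ∈ V, B u v = k * b u v

/-- A family of symmetric forms `b i`, each regarded only on the hyperplane `ker (l i)`, such that
any two of them agree up to a positive factor where both are regarded, and such that the
hyperplanes are in general position. -/
structure CompatibleForms {ι : Type*} (l : ι → Module.Dual ℝ W) (b : ι → BilinForm ℝ W)
    (S : Set ι) : Prop where
  isSymm : ∀ i ∈ S, (b i).IsSymm
  exists_dual : ∀ i ∈ S, ∀ j ∈ S, ∀ k ∈ S, i ≠ j → i ≠ k → j ≠ k →
    ∃ e, l i e = 1 ∧ l j e = 0 ∧ l k e = 0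
  isPosMultipleOn : ∀ i ∈ S, ∀ j ∈ S, i ≠ j →
    IsPosMultipleOn ((l i).ker ⊓ (l j).ker) (b i) (b j)
  exists_pos : ∀ i ∈ S, ∀ j ∈ S, ∀ k ∈ S, i ≠ j → i ≠ k → j ≠ k →
    ∃ u, l i u = 0 ∧ l j u = 0 ∧ l k u = 0 ∧ 0 < b i u u

/-- Replace `B` by `b` after projecting along `e` onto `ker l`. -/
lemma exists_isSymm_eq_on_ker {l : Module.Dual ℝ W} {e : W} {B b : BilinForm ℝ W} (he : l e = 1)
    (hB : B.IsSymm) (hb : b.IsSymm) :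
    ∃ B' : BilinForm ℝ W, B'.IsSymm ∧ (∀ u ∈ l.ker, ∀ v ∈ l.ker, B' u v = b u v) ∧
      ∀ l' : Module.Dual ℝ W, l' e = 0 →
        (∀ u ∈ l.ker ⊓ l'.ker, ∀ v ∈ l.ker ⊓ l'.ker, B u v = b u v) →
        ∀ u ∈ l'.ker, ∀ v ∈ l'.ker, B' u v = B u v := by
  set P : W →ₗ[ℝ] W := LinearMap.id - l.smulRight e
  have hP (u : W) : P u = u - l u • e := rfl
  refine ⟨B + (b - B).compl₁₂ P P, hB.add ⟨fun u v => (hb.sub hB).eq (P u) (P v)⟩, ?_, ?_⟩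
  · intro u hu v hv
    simp [hP, LinearMap.mem_ker.1 hu, LinearMap.mem_ker.1 hv]
  · intro l' hl'e hBb u hu v hv
    have hPmem (w : W) (hw : w ∈ l'.ker) : P w ∈ l.ker ⊓ l'.ker := by
      simp [hP, he, hl'e, LinearMap.mem_ker.1 hw]
    simp [hBb _ (hPmem u hu) _ (hPmem v hv)]

/-- On `V`, modulo the common kernel, `g` is a multiple of the product `l₁ l₂`, which does not
vanish on `ker l₃`. -/
lemma eq_zero_of_eq_zero_on_ker {V : Submodule ℝ W} {g : BilinForm ℝ W} (hg : g.IsSymm)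
    {l₁ l₂ l₃ : Module.Dual ℝ W} {e f x w : W}
    (h₁ : ∀ u ∈ V ⊓ l₁.ker, ∀ v ∈ V ⊓ l₁.ker, g u v = 0)
    (h₂ : ∀ u ∈ V ⊓ l₂.ker, ∀ v ∈ V ⊓ l₂.ker, g u v = 0)
    (h₃ : ∀ u ∈ V ⊓ l₃.ker, ∀ v ∈ V ⊓ l₃.ker, g u v = 0)
    (heV : e ∈ V) (he₁ : l₁ e = 1) (hfV : f ∈ V) (hf₁ : l₁ f = 0) (hf₂ : l₂ f = 1)
    (hxV : x ∈ V) (hx₁ : l₁ x = 1) (hx₃ : l₃ x = 0) (hwV : w ∈ V)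
    (hw₂ : l₂ w = 1) (hw₃ : l₃ w = 0) {u v : W} (hu : u ∈ V) (hv : v ∈ V) : g u v = 0 := by
  have hright (u : W) (hu : u ∈ V ⊓ l₂.ker) : g u f = l₁ u * g e f := by
    have hmem : u - l₁ u • e ∈ V ⊓ l₁.ker :=
      ⟨V.sub_mem hu.1 (V.smul_mem _ heV), by simp [he₁]⟩
    have hzero := h₁ _ hmem f ⟨hfV, hf₁⟩
    rw [map_sub, map_smul, LinearMap.sub_apply, LinearMap.smul_apply, smul_eq_mul] at hzero
    exact sub_eq_zero.1 hzero
  have hmul (u : W) (hu : u ∈ V) (v : W) (hv : v ∈ V) :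
      g u v = (l₁ u * l₂ v + l₂ u * l₁ v) * g e f := by
    have hmem (u : W) (hu : u ∈ V) : u - l₂ u • f ∈ V ⊓ l₂.ker :=
      ⟨V.sub_mem hu (V.smul_mem _ hfV), by simp [hf₂]⟩
    have hzero := h₂ _ (hmem u hu) _ (hmem v hv)
    have hu' := hright _ (hmem u hu)
    have hv' := hright _ (hmem v hv)
    have hff := h₁ f ⟨hfV, hf₁⟩ f ⟨hfV, hf₁⟩
    simp only [map_sub, map_smul, LinearMap.sub_apply, LinearMap.smul_apply, smul_eq_mul, hff,
      hf₁, mul_zero, sub_zero] at hzero hu' hv'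
    rw [hg.eq f v] at hzero
    linear_combination hzero + l₂ v * hu' + l₂ u * hv'
  have hgef : g e f = 0 := by
    have hxx := h₃ x ⟨hxV, hx₃⟩ x ⟨hxV, hx₃⟩
    have hxw := h₃ x ⟨hxV, hx₃⟩ w ⟨hwV, hw₃⟩
    rw [hmul x hxV x hxV, hx₁] at hxx
    rw [hmul x hxV w hwV, hx₁, hw₂] at hxw
    linear_combination hxw - l₁ w / 2 * hxx
  rw [hmul u hu v hv, hgef, mul_zero]

namespace CompatibleForms

variable {ι : Type*} {l : ι → Module.Dual ℝ W} {b : ι → BilinForm ℝ W} {S : Set ι}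
  {B : BilinForm ℝ W}

lemma exists_eq_mul_of_isPosMultipleOn (h : CompatibleForms l b S) {A : Set ι} (hA : A ⊆ S)
    {m : ι} (hm : m ∈ S) (hmA : m ∉ A) (hB : ∀ n ∈ A, IsPosMultipleOn (l n).ker B (b n)) :
    ∃ q : ℝ, 0 < q ∧ ∀ n ∈ A, ∀ u ∈ (l m).ker ⊓ (l n).ker, ∀ v ∈ (l m).ker ⊓ (l n).ker,
      B u v = q * b m u v := by
  have hq (n : ι) (hn : n ∈ A) : ∃ q : ℝ, 0 < q ∧ ∀ u ∈ (l m).ker ⊓ (l n).ker,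
      ∀ v ∈ (l m).ker ⊓ (l n).ker, B u v = q * b m u v := by
    obtain ⟨s, hs, hBn⟩ := hB n hn
    obtain ⟨t, ht, hnm⟩ := h.isPosMultipleOn n (hA hn) m hm (ne_of_mem_of_not_mem hn hmA)
    refine ⟨s * t, mul_pos hs ht, fun u hu v hv => ?_⟩
    rw [hBn u hu.2 v hv.2, hnm u hu.symm v hv.symm, mul_assoc]
  obtain rfl | ⟨n, hn⟩ := A.eq_empty_or_nonempty
  · exact ⟨1, one_pos, by simp⟩
  obtain ⟨q, hq0, hqn⟩ := hq n hn
  refine ⟨q, hq0, fun n' hn' => ?_⟩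
  obtain rfl | hnn' := eq_or_ne n n'
  · exact hqn
  obtain ⟨q', -, hqn'⟩ := hq n' hn'
  obtain ⟨u, hum, hun, hun', hpos⟩ := h.exists_pos m hm n (hA hn) n' (hA hn')
    (ne_of_mem_of_not_mem hn hmA).symm (ne_of_mem_of_not_mem hn' hmA).symm hnn'
  have hqq' : q' * b m u u = q * b m u u :=
    (hqn' u ⟨hum, hun'⟩ u ⟨hum, hun'⟩).symm.trans (hqn u ⟨hum, hun⟩ u ⟨hum, hun⟩)
  rwa [mul_right_cancel₀ hpos.ne' hqq'] at hqn'

lemma exists_isPosMultipleOn_insert (h : CompatibleForms l b S) {A : Set ι} (hA : A ⊆ S)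
    {m : ι} (hm : m ∈ S) (hmA : m ∉ A) (hBs : B.IsSymm)
    (hB : ∀ n ∈ A, IsPosMultipleOn (l n).ker B (b n)) {e : W} (hme : l m e = 1)
    (hAe : ∀ n ∈ A, l n e = 0) :
    ∃ B' : BilinForm ℝ W, B'.IsSymm ∧
      ∀ n ∈ insert m A, IsPosMultipleOn (l n).ker B' (b n) := by
  obtain ⟨q, hq, hBq⟩ := h.exists_eq_mul_of_isPosMultipleOn hA hm hmA hB
  obtain ⟨B', hB's, hB'm, hB'n⟩ := exists_isSymm_eq_on_ker hme hBs ((h.isSymm m hm).smul q)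
  refine ⟨B', hB's, ?_⟩
  rintro n (rfl | hn)
  · exact ⟨q, hq, hB'm⟩
  · obtain ⟨s, hs, hBn⟩ := hB n hn
    refine ⟨s, hs, fun u hu v hv => ?_⟩
    rw [hB'n (l n) (hAe n hn) (hBq n hn) u hu v hv, hBn u hu v hv]

lemma exists_isPosMultipleOn_triple (h : CompatibleForms l b S) {i j k : ι} (hi : i ∈ S)
    (hj : j ∈ S) (hk : k ∈ S) (hij : i ≠ j) (hik : i ≠ k) (hjk : j ≠ k) :
    ∃ B : BilinForm ℝ W, B.IsSymm ∧
      ∀ n ∈ ({k, j, i} : Set ι), IsPosMultipleOn (l n).ker B (b n) := by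
  obtain ⟨e, hje, hie, -⟩ := h.exists_dual j hj i hi k hk hij.symm hjk hik
  obtain ⟨f, hkf, hif, hjf⟩ := h.exists_dual k hk i hi j hj hik.symm hjk.symm hij
  obtain ⟨B, hBs, hB⟩ := h.exists_isPosMultipleOn_insert (A := {i}) (by simpa) hj
    (by simpa using hij.symm) (h.isSymm i hi)
    (by simpa using ⟨1, one_pos, fun u _ v _ => (one_mul _).symm⟩) hje (by simpa)
  exact h.exists_isPosMultipleOn_insert (by simp [insert_subset_iff, hi, hj]) hk
    (by simp [hjk.symm, hik.symm]) hBs hB hkf (by simp [hif, hjf])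

lemma isPosMultipleOn_of_triple (h : CompatibleForms l b S) {i j k m : ι} (hi : i ∈ S)
    (hj : j ∈ S) (hk : k ∈ S) (hm : m ∈ S) (hij : i ≠ j) (hik : i ≠ k) (hjk : j ≠ k)
    (hBs : B.IsSymm) (hB : ∀ n ∈ ({k, j, i} : Set ι), IsPosMultipleOn (l n).ker B (b n)) :
    IsPosMultipleOn (l m).ker B (b m) := by
  by_cases hmA : m ∈ ({k, j, i} : Set ι)
  · exact hB m hmA
  obtain ⟨q, hq, hBq⟩ := h.exists_eq_mul_of_isPosMultipleOn
    (by simp [insert_subset_iff, hi, hj, hk]) hm hmA hB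
  have hzero (n : ι) (hn : n ∈ ({k, j, i} : Set ι)) (u : W) (hu : u ∈ (l m).ker ⊓ (l n).ker)
      (v : W) (hv : v ∈ (l m).ker ⊓ (l n).ker) : (B - q • b m) u v = 0 :=
    sub_eq_zero.2 (hBq n hn u hu v hv)
  simp only [mem_insert_iff, mem_singleton_iff, not_or] at hmA
  obtain ⟨hmk, hmj, hmi⟩ := hmA
  obtain ⟨e, hie, -, hme⟩ := h.exists_dual i hi j hj m hm hij (Ne.symm hmi) (Ne.symm hmj)
  obtain ⟨f, hjf, hif, hmf⟩ := h.exists_dual j hj i hi m hm hij.symm (Ne.symm hmj) (Ne.symm hmi)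
  obtain ⟨x, hix, hkx, hmx⟩ := h.exists_dual i hi k hk m hm hik (Ne.symm hmi) (Ne.symm hmk)
  obtain ⟨w, hjw, hkw, hmw⟩ := h.exists_dual j hj k hk m hm hjk (Ne.symm hmj) (Ne.symm hmk)
  exact ⟨q, hq, fun u hu v hv => sub_eq_zero.1 <|
    eq_zero_of_eq_zero_on_ker (hBs.sub ((h.isSymm m hm).smul q)) (hzero i (by simp))
      (hzero j (by simp)) (hzero k (by simp)) hme hie hmf hif hjf hmx hix hkx hmw hjw hkw
      hu hv⟩

end CompatibleForms

lemma exists_three_ne_of_mem_nhds {X : Type*} [TopologicalSpace X] [T1Space X] {x : X}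
    [NeBot (𝓝[≠] x)] {N : Set X} (hN : N ∈ 𝓝 x) :
    ∃ i ∈ N, ∃ j ∈ N, ∃ k ∈ N, i ≠ j ∧ i ≠ k ∧ j ≠ k := by
  classical
  obtain ⟨t, htN, ht⟩ := (infinite_of_mem_nhds x hN).exists_subset_card_eq 3
  obtain ⟨i, j, k, hij, hik, hjk, rfl⟩ := Finset.card_eq_three.1 ht
  exact ⟨i, htN (by simp), j, htN (by simp), k, htN (by simp), hij, hik, hjk⟩

/-- The set of indices matched by a form built near one point is open and, since three indices
determine the rest locally, closed. -/
lemma exists_isPosMultipleOn_of_locally {X : Type*} [TopologicalSpace X] [T1Space X]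
    [ConnectedSpace X] [∀ x : X, NeBot (𝓝[≠] x)] {l : X → Module.Dual ℝ W}
    {b : X → BilinForm ℝ W} (h : ∀ x, ∃ N ∈ 𝓝 x, CompatibleForms l b N) :
    ∃ B : BilinForm ℝ W, B.IsSymm ∧ ∀ x, IsPosMultipleOn (l x).ker B (b x) := by
  obtain ⟨x₀⟩ := ‹ConnectedSpace X›.toNonempty
  obtain ⟨N, hN, hNF⟩ := h x₀
  obtain ⟨i, hi, j, hj, k, hk, hij, hik, hjk⟩ := exists_three_ne_of_mem_nhds hN
  obtain ⟨B, hBs, hB⟩ := hNF.exists_isPosMultipleOn_triple hi hj hk hij hik hjk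
  refine ⟨B, hBs, ?_⟩
  set U := interior {x | IsPosMultipleOn (l x).ker B (b x)}
  have hU : U ⊆ {x | IsPosMultipleOn (l x).ker B (b x)} := interior_subset
  have hUne : x₀ ∈ U := mem_interior_iff_mem_nhds.2 <| mem_of_superset hN fun m hm =>
    hNF.isPosMultipleOn_of_triple hi hj hk hm hij hik hjk hBs hB
  have hUcl : IsClosed U := isClosed_of_closure_subset fun x hx => by
    obtain ⟨N, hN, hNF⟩ := h x
    obtain ⟨x', hx'N, hx'U⟩ := mem_closure_iff_nhds.1 hx _ (interior_mem_nhds.2 hN)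
    obtain ⟨i, hi, j, hj, k, hk, hij, hik, hjk⟩ := exists_three_ne_of_mem_nhds
      ((isOpen_interior.inter isOpen_interior).mem_nhds ⟨hx'N, hx'U⟩)
    refine mem_interior_iff_mem_nhds.2 <| mem_of_superset hN fun m hm =>
      hNF.isPosMultipleOn_of_triple (interior_subset hi.1) (interior_subset hj.1)
        (interior_subset hk.1) hm hij hik hjk hBs ?_
    rintro n (rfl | rfl | rfl)
    exacts [hU hk.2, hU hj.2, hU hi.2]
  have hUuniv : U = univ := IsClopen.eq_univ ⟨hUcl, isOpen_interior⟩ ⟨x₀, hUne⟩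
  exact fun x => hU (hUuniv ▸ mem_univ x)

end Gluing

section Homogenization

open LinearMap (BilinForm)

section InnerProductSpace

variable {E : Type*} [NormedAddCommGroup E] [InnerProductSpace ℝ E]

/-- The linear extension to `E × ℝ` of the map `v ↦ v - x` on the affine chart `E × {1}`. -/
def homogenizedSub (x : E) : E × ℝ →ₗ[ℝ] E :=
  LinearMap.fst ℝ E ℝ - (LinearMap.snd ℝ E ℝ).smulRight x

/-- The functional on `E × ℝ` whose zero set in the affine chart `E × {1}` is the supporting plane
at `p y` with normal `y`. -/
def supportFunctional (p : E → E) (y : E) : Module.Dual ℝ (E × ℝ) :=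
  innerₗ E y ∘ₗ homogenizedSub (p y)

/-- The bilinear form on `E × ℝ` whose quadratic form is `v ↦ ⟪M (v - x), v - x⟫` in the affine
chart `E × {1}`. -/
def contactForm (x : E) (M : E →ₗ[ℝ] E) : BilinForm ℝ (E × ℝ) :=
  (innerₗ E).compl₁₂ (M ∘ₗ homogenizedSub x) (homogenizedSub x)

lemma supportFunctional_apply (p : E → E) (y : E) (u : E × ℝ) :
    supportFunctional p y u = ⟪y, u.1 - u.2 • p y⟫ :=
  rfl

lemma contactForm_apply (x : E) (M : E →ₗ[ℝ] E) (u v : E × ℝ) :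
    contactForm x M u v = ⟪M (u.1 - u.2 • x), v.1 - v.2 • x⟫ :=
  rfl

lemma isSymm_contactForm {M : E →ₗ[ℝ] E} (hM : M.IsSymmetric) (x : E) :
    (contactForm x M).IsSymm :=
  ⟨fun _ _ => (hM _ _).trans (real_inner_comm _ _)⟩

lemma exists_inner_eq_zero_inner_eq_norm_le {y y' D : E} (hy : ‖y‖ = 1) (hyy' : 0 ≤ ⟪y, y'⟫)
    (hyD : ⟪y, D⟫ ≤ 0) (hy'D : 0 < ⟪y', D⟫) :
    ∃ v, ⟪y, v⟫ = 0 ∧ ⟪y', v⟫ = ⟪y', D⟫ ∧ ‖v‖ ≤ 2 * ‖D‖ := by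
  have hle : ⟪y', D⟫ ≤ ⟪y', D⟫ - ⟪y, D⟫ * ⟪y, y'⟫ := by
    linarith [mul_nonpos_of_nonpos_of_nonneg hyD hyy']
  have hden := hy'D.trans_le hle
  set s := ⟪y', D⟫ / (⟪y', D⟫ - ⟪y, D⟫ * ⟪y, y'⟫)
  refine ⟨s • (D - ⟪y, D⟫ • y), ?_, ?_, ?_⟩
  · simp [inner_smul_right, inner_sub_right, hy]
  · rw [inner_smul_right, inner_sub_right, inner_smul_right, real_inner_comm y y']
    exact div_mul_cancel₀ _ hden.ne'
  · calc ‖s • (D - ⟪y, D⟫ • y)‖ ≤ 1 * ‖D - ⟪y, D⟫ • y‖ := by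
          rw [norm_smul, Real.norm_of_nonneg (div_pos hy'D hden).le]
          gcongr
          exact (div_le_one hden).2 hle
      _ ≤ ‖D‖ + ‖⟪y, D⟫ • y‖ := by rw [one_mul]; exact norm_sub_le _ _
      _ ≤ ‖D‖ + ‖D‖ := by
          gcongr
          simpa [norm_smul, hy] using norm_inner_le_norm (𝕜 := ℝ) y D
      _ = 2 * ‖D‖ := (two_mul _).symm

end InnerProductSpace

/-- A form on the span of `z` and `w` is determined up to a factor by the two ratios `P`, `P'`. -/
lemma isPosMultipleOn_of_subset_span_pair {W : Type*} [AddCommGroup W] [Module ℝ W]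
    {V : Submodule ℝ W} {B B' : BilinForm ℝ W} (hB : B.IsSymm) (hB' : B'.IsSymm) {z w : W}
    {P P' : ℝ} (hV : V ≤ Submodule.span ℝ {z, w}) (hP' : P' ≠ 0)
    (hz : 0 < B z z) (hz' : 0 < B' z z) (hzw : B z w = B z z * P) (hzw' : B' z w = B' z z * P)
    (hwz : B w z = B w w * P') (hwz' : B' w z = B' w w * P') :
    IsPosMultipleOn V B B' := by
  have hww : B w w = B z z * P / P' := by rw [eq_div_iff hP', ← hwz, hB.eq, hzw]
  have hww' : B' w w = B' z z * P / P' := by rw [eq_div_iff hP', ← hwz', hB'.eq, hzw']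
  refine ⟨B z z / B' z z, div_pos hz hz', fun u hu v hv => ?_⟩
  obtain ⟨α, β, rfl⟩ := Submodule.mem_span_pair.1 (hV hu)
  obtain ⟨α', β', rfl⟩ := Submodule.mem_span_pair.1 (hV hv)
  simp only [map_add, map_smul, LinearMap.add_apply, LinearMap.smul_apply, smul_eq_mul, hB.eq w z,
    hB'.eq w z, hzw, hzw', hww, hww']
  field_simp

lemma ker_inf_ker_supportFunctional_le_span {p : E3 → E3} {y y' z w : E3}
    (hyy' : LinearIndependent ℝ ![y, y']) (hzw : z ≠ w) (hyz : ⟪y, z - p y⟫ = 0)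
    (hyw : ⟪y, w - p y⟫ = 0) (hy'z : ⟪y', z - p y'⟫ = 0) (hy'w : ⟪y', w - p y'⟫ = 0) :
    (supportFunctional p y).ker ⊓ (supportFunctional p y').ker ≤
      Submodule.span ℝ {(z, (1 : ℝ)), (w, (1 : ℝ))} := by
  intro v hv
  rw [Submodule.mem_inf, LinearMap.mem_ker, LinearMap.mem_ker, supportFunctional_apply,
    supportFunctional_apply] at hv
  obtain ⟨hv, hv'⟩ := hv
  have hortho {x : E3} (hz : ⟪x, z - p x⟫ = 0) (hw : ⟪x, w - p x⟫ = 0)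
      (hv : ⟪x, v.1 - v.2 • p x⟫ = 0) : ⟪x, z - w⟫ = 0 ∧ ⟪x, v.1 - v.2 • z⟫ = 0 := by
    simp only [inner_sub_right, real_inner_smul_right] at *
    constructor
    · linear_combination hz - hw
    · linear_combination hv - v.2 * hz
  obtain ⟨hzw₁, hv₁⟩ := hortho hyz hyw hv
  obtain ⟨hzw₂, hv₂⟩ := hortho hy'z hy'w hv'
  obtain ⟨c, hc⟩ := exists_eq_smul_of_inner_eq_zero hyy' (sub_ne_zero.2 hzw) hzw₁ hzw₂ hv₁ hv₂
  refine Submodule.mem_span_pair.2 ⟨v.2 + c, -c, Prod.ext ?_ (by simp)⟩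
  rw [eq_add_of_sub_eq hc]
  simp only [Prod.smul_mk, Prod.mk_add_mk]
  module

namespace HasPlanarGrazes

variable {K L : Set E3} {p a : E3 → E3} (h : HasPlanarGrazes K L p a)
include h

lemma inner_apply_sub_neg {y y' : E3} (hy : ‖y‖ = 1) (hy' : ‖y'‖ = 1) (hne : y ≠ y') :
    ⟪y, p y' - p y⟫ < 0 := by
  rw [inner_sub_right, sub_neg]
  refine (h.isSupportMap.inner_le y _ (h.isSupportMap.mem y')).lt_of_ne fun heq => ?_
  exact hne (h.eq_of_apply_eq hy hy' (h.isSupportMap.eq_of_inner_le y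
    (norm_ne_zero_iff.1 (hy ▸ one_ne_zero)) _ (h.isSupportMap.mem y') heq.ge).symm)

lemma exists_supportFunctional_eq_one {y₁ y₂ y₃ : E3} (h₁ : ‖y₁‖ = 1) (h₂ : ‖y₂‖ = 1)
    (h₃ : ‖y₃‖ = 1) (h₁₂ : y₁ ≠ y₂) (h₁₃ : y₁ ≠ y₃) (h₂₃ : y₂ ≠ y₃) :
    ∃ e, supportFunctional p y₁ e = 1 ∧ supportFunctional p y₂ e = 0 ∧
      supportFunctional p y₃ e = 0 := by
  by_contra! hno
  have hker (e : E3 × ℝ) (he₂ : supportFunctional p y₂ e = 0)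
      (he₃ : supportFunctional p y₃ e = 0) : supportFunctional p y₁ e = 0 := by
    by_contra he₁
    exact hno ((supportFunctional p y₁ e)⁻¹ • e) (by simp [he₁]) (by simp [he₂]) (by simp [he₃])
  have hspan := mem_span_of_iInf_ker_le_ker (K := supportFunctional p y₁)
    (L := ![supportFunctional p y₂, supportFunctional p y₃]) fun e he => by
      simp only [Submodule.mem_iInf, LinearMap.mem_ker] at he
      exact hker e (he 0) (he 1)
  rw [Matrix.range_cons_cons_empty, Submodule.mem_span_pair] at hspan
  obtain ⟨α, β, hαβ⟩ := hspan
  have heval (y : E3) : α * ⟪y₂, p y - p y₂⟫ + β * ⟪y₃, p y - p y₃⟫ = ⟪y₁, p y - p y₁⟫ := by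
    simpa [supportFunctional_apply] using congrArg (fun l => l (p y, (1 : ℝ))) hαβ
  have heval₁ := heval y₁
  have heval₂ := heval y₂
  have heval₃ := heval y₃
  simp only [sub_self, inner_zero_right, mul_zero, zero_add, add_zero] at heval₁ heval₂ heval₃
  have hβ : 0 < β := pos_of_mul_neg_left
    (heval₂.trans_lt (h.inner_apply_sub_neg h₁ h₂ h₁₂)) (h.inner_apply_sub_neg h₃ h₂ h₂₃.symm).le
  have hα : 0 < α := pos_of_mul_neg_left
    (heval₃.trans_lt (h.inner_apply_sub_neg h₁ h₃ h₁₃)) (h.inner_apply_sub_neg h₂ h₃ h₂₃).le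
  have hneg₂ := mul_neg_of_pos_of_neg hα (h.inner_apply_sub_neg h₂ h₁ h₁₂.symm)
  have hneg₃ := mul_neg_of_pos_of_neg hβ (h.inner_apply_sub_neg h₃ h₁ h₁₃.symm)
  linarith

lemma exists_contactForm_pos {y₁ y₂ y₃ : E3} {M : E3 ≃ₗ[ℝ] E3}
    (hM : IsContactConjugation K p a y₁ M) (h₁ : ‖y₁‖ = 1) (h₂ : ‖y₂‖ = 1) (h₁₂ : y₁ ≠ y₂) :
    ∃ u, supportFunctional p y₁ u = 0 ∧ supportFunctional p y₂ u = 0 ∧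
      supportFunctional p y₃ u = 0 ∧ 0 < contactForm (p y₁) M u u := by
  have hker := LinearMap.ker_ne_bot_of_finrank_lt (f := LinearMap.pi
    ![supportFunctional p y₁, supportFunctional p y₂, supportFunctional p y₃]) (by simp)
  obtain ⟨u, hu, hu0⟩ := Submodule.exists_mem_ne_zero_of_ne_bot hker
  have hu' (i) := congrFun (LinearMap.mem_ker.1 hu) i
  have hu₂ : supportFunctional p y₂ u = 0 := hu' 1
  refine ⟨u, hu' 0, hu₂, hu' 2, hM.inner_self_pos fun h0 => hu0 ?_⟩
  replace h0 : u.1 = u.2 • p y₁ := sub_eq_zero.1 h0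
  rw [supportFunctional_apply, h0, ← smul_sub, real_inner_smul_right] at hu₂
  have hsnd := (mul_eq_zero.1 hu₂).resolve_right (h.inner_apply_sub_neg h₂ h₁ h₁₂.symm).ne
  exact Prod.ext (by rw [h0, hsnd, zero_smul, Prod.fst_zero]) hsnd

lemma contactForm_eq_mul {y z w : E3} {M : E3 ≃ₗ[ℝ] E3} (hM : IsContactConjugation K p a y M)
    (hy : y ≠ 0) (hz : z ∈ frontier K) (hyz : ⟪y, z - p y⟫ = 0) (hyw : ⟪y, w - p y⟫ = 0) :
    contactForm (p y) M (z, 1) (w, 1) =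
      contactForm (p y) M (z, 1) (z, 1) * (1 + ⟪a z, w - z⟫) := by
  simp only [contactForm_apply, one_smul]
  rw [← h.inner_normal_eq_one z hz y hy hyz, ← inner_add_right, sub_add_sub_cancel']
  exact hM.inner_apply_sub z hz hyz _ hyw

/-- In the plane of `p y`, `z`, `w` the value of the form at `w` and its polar ratios are fixed by
the tangent planes of `K` at `z` and `w`, which do not depend on `y`. -/
lemma isPosMultipleOn_contactForm {y y' z w : E3} {M M' : E3 ≃ₗ[ℝ] E3}
    (hM : IsContactConjugation K p a y M) (hM' : IsContactConjugation K p a y' M')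
    (hyy' : LinearIndependent ℝ ![y, y']) (hz : z ∈ frontier K) (hw : w ∈ frontier K)
    (hzw : z ≠ w) (hyz : ⟪y, z - p y⟫ = 0) (hyw : ⟪y, w - p y⟫ = 0)
    (hy'z : ⟪y', z - p y'⟫ = 0) (hy'w : ⟪y', w - p y'⟫ = 0) (hne : 1 + ⟪a w, z - w⟫ ≠ 0) :
    IsPosMultipleOn ((supportFunctional p y).ker ⊓ (supportFunctional p y').ker)
      (contactForm (p y) M) (contactForm (p y') M') := by
  have hy : y ≠ 0 := hyy'.ne_zero 0
  have hy' : y' ≠ 0 := hyy'.ne_zero 1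
  refine isPosMultipleOn_of_subset_span_pair (isSymm_contactForm hM.isPositive.isSymmetric _)
    (isSymm_contactForm hM'.isPositive.isSymmetric _)
    (ker_inf_ker_supportFunctional_le_span hyy' hzw hyz hyw hy'z hy'w) hne ?_ ?_
    (h.contactForm_eq_mul hM hy hz hyz hyw) (h.contactForm_eq_mul hM' hy' hz hy'z hy'w)
    (h.contactForm_eq_mul hM hy hw hyw hyz) (h.contactForm_eq_mul hM' hy' hw hy'w hy'z) <;>
    rw [contactForm_apply, one_smul]
  exacts [hM.inner_self_pos (h.sub_apply_ne_zero hz y),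
    hM'.inner_self_pos (h.sub_apply_ne_zero hz y')]

end HasPlanarGrazes

end Homogenization

section GlobalForm

lemma linearIndependent_pair_of_inner_pos {E : Type*} [NormedAddCommGroup E]
    [InnerProductSpace ℝ E] {y y' : E} (hy : ‖y‖ = 1) (hy' : ‖y'‖ = 1) (hne : y ≠ y')
    (hpos : 0 < ⟪y, y'⟫) : LinearIndependent ℝ ![y, y'] := by
  have hne0 : 1 + ⟪y, y'⟫ ≠ 0 := by positivity
  refine linearIndependent_pair_of_inner_eq_one (d := (1 + ⟪y, y'⟫)⁻¹ • (y + y')) hne ?_ ?_ <;>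
    rw [inner_smul_right, inner_add_right, real_inner_self_eq_norm_sq]
  · rw [hy, one_pow, inv_mul_cancel₀ hne0]
  · rw [hy', one_pow, real_inner_comm y y', add_comm _ (1 : ℝ), inv_mul_cancel₀ hne0]

namespace HasPlanarGrazes

variable {K L : Set E3} {p a : E3 → E3} (h : HasPlanarGrazes K L p a)
include h

lemma one_add_inner_exitPoint_ne_zero {y d : E3} (hy : y ≠ 0) (hd : d ≠ 0) (hyd : ⟪y, d⟫ = 0) :
    1 + ⟪a (exitPoint K (p y) (-d)), exitPoint K (p y) d - exitPoint K (p y) (-d)⟫ ≠ 0 := by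
  have hint := h.apply_mem_interior y
  obtain ⟨s, hs, hsd⟩ := h.exists_exitPoint_sub_eq_smul hint hd
  obtain ⟨t, -, htd⟩ := h.exists_exitPoint_sub_eq_smul hint (neg_ne_zero.2 hd)
  have hone := h.inner_normal_eq_one _ (h.exitPoint_mem_frontier hint (neg_ne_zero.2 hd)) y hy
    (by rw [htd, inner_smul_right, inner_neg_right, hyd, neg_zero, mul_zero])
  rw [← sub_sub_sub_cancel_right _ _ (p y), inner_sub_right, hone, add_sub_cancel, hsd,
    inner_smul_right]
  rw [htd, inner_smul_right, inner_neg_right] at hone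
  refine mul_ne_zero hs.ne' fun h0 => ?_
  rw [h0, neg_zero, mul_zero] at hone
  exact zero_ne_one hone

lemma eventually_one_add_inner_exitPoint_ne_zero {y d : E3} (hy : y ≠ 0) (hd : d ≠ 0)
    (hyd : ⟪y, d⟫ = 0) {X : Type*} {l : Filter X} {u δ : X → E3} (hu : Tendsto u l (𝓝 (p y)))
    (hδ : Tendsto δ l (𝓝 d)) :
    ∀ᶠ x in l, 1 + ⟪a (exitPoint K (u x) (-δ x)),
      exitPoint K (u x) (δ x) - exitPoint K (u x) (-δ x)⟫ ≠ 0 := by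
  have hint := h.apply_mem_interior y
  have hz := h.tendsto_exitPoint hint hd hu hδ
  have hw := h.tendsto_exitPoint hint (neg_ne_zero.2 hd) hu hδ.neg
  have hwK : ∀ᶠ x in l, exitPoint K (u x) (-δ x) ∈ frontier K := by
    filter_upwards [hu.eventually_mem (isOpen_interior.mem_nhds hint), hδ.eventually_ne hd]
      with x hux hδx
    exact h.exitPoint_mem_frontier hux (neg_ne_zero.2 hδx)
  have haw := h.tendsto_normal (h.exitPoint_mem_frontier hint (neg_ne_zero.2 hd)) hwK hw
  exact ((haw.inner (𝕜 := ℝ) (hz.sub hw)).const_add 1).eventually_ne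
    (h.one_add_inner_exitPoint_ne_zero hy hd hyd)

lemma exists_mem_supporting_planes {y y' : E3} (hy : ‖y‖ = 1) (hy' : ‖y'‖ = 1) (hne : y ≠ y')
    (hyy' : 0 ≤ ⟪y, y'⟫) :
    ∃ u, ⟪y, u - p y⟫ = 0 ∧ ⟪y', u - p y'⟫ = 0 ∧ ‖u - p y‖ ≤ 2 * ‖p y' - p y‖ := by
  have hpos : 0 < ⟪y', p y' - p y⟫ := by
    rw [← neg_sub, inner_neg_right]
    exact neg_pos.2 (h.inner_apply_sub_neg hy' hy hne.symm)
  obtain ⟨v, hyv, hy'v, hv⟩ := exists_inner_eq_zero_inner_eq_norm_le hy hyy'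
    (h.inner_apply_sub_neg hy hy' hne).le hpos
  refine ⟨p y + v, by rwa [add_sub_cancel_left], ?_, by rwa [add_sub_cancel_left]⟩
  rw [add_comm, ← sub_sub_eq_add_sub, inner_sub_right, hy'v, sub_self]

/-- Two nearby supporting planes meet in a line, which meets `frontier K` in two points `z`, `w`. -/
lemma isPosMultipleOn_of_exitPoint {y y' u d : E3} {M M' : E3 ≃ₗ[ℝ] E3}
    (hM : IsContactConjugation K p a y M) (hM' : IsContactConjugation K p a y' M')
    (hyy' : LinearIndependent ℝ ![y, y']) (hu : u ∈ interior K) (hyu : ⟪y, u - p y⟫ = 0)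
    (hy'u : ⟪y', u - p y'⟫ = 0) (hd : d ≠ 0) (hyd : ⟪y, d⟫ = 0) (hy'd : ⟪y', d⟫ = 0)
    (hne : 1 + ⟪a (exitPoint K u (-d)), exitPoint K u d - exitPoint K u (-d)⟫ ≠ 0) :
    IsPosMultipleOn ((supportFunctional p y).ker ⊓ (supportFunctional p y').ker)
      (contactForm (p y) M) (contactForm (p y') M') := by
  obtain ⟨s, hs, hsd⟩ := h.exists_exitPoint_sub_eq_smul hu hd
  obtain ⟨t, ht, htd⟩ := h.exists_exitPoint_sub_eq_smul hu (neg_ne_zero.2 hd)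
  have hplane {y z : E3} {r : ℝ} (hyu : ⟪y, u - p y⟫ = 0) (hyd : ⟪y, d⟫ = 0)
      (hz : z - u = r • d) : ⟪y, z - p y⟫ = 0 := by
    rw [← sub_add_sub_cancel z u, inner_add_right, hz, inner_smul_right, hyd, hyu, mul_zero,
      add_zero]
  rw [smul_neg, ← neg_smul] at htd
  have hzw : exitPoint K u d ≠ exitPoint K u (-d) := fun heq => by
    rw [heq, htd] at hsd
    linarith [smul_left_injective ℝ hd hsd]
  exact h.isPosMultipleOn_contactForm hM hM' hyy' (h.exitPoint_mem_frontier hu hd)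
    (h.exitPoint_mem_frontier hu (neg_ne_zero.2 hd)) hzw (hplane hyu hyd hsd)
    (hplane hyu hyd htd) (hplane hy'u hy'd hsd) (hplane hy'u hy'd htd) hne

lemma exists_tendsto_mem_supporting_planes {X : Type*} {l : Filter X} {y y' : X → E3} {y₀ : E3}
    (hy₀ : ‖y₀‖ = 1) (hy : Tendsto y l (𝓝 y₀)) (hy' : Tendsto y' l (𝓝 y₀))
    (hyy' : ∀ᶠ x in l, ‖y x‖ = 1 ∧ ‖y' x‖ = 1 ∧ y x ≠ y' x) :
    ∃ u : X → E3, Tendsto u l (𝓝 (p y₀)) ∧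
      ∀ᶠ x in l, ⟪y x, u x - p (y x)⟫ = 0 ∧ ⟪y' x, u x - p (y' x)⟫ = 0 := by
  have hy₀0 : y₀ ≠ 0 := norm_ne_zero_iff.1 (hy₀ ▸ one_ne_zero)
  have hinner : ∀ᶠ x in l, 0 < ⟪y x, y' x⟫ :=
    (hy.inner (𝕜 := ℝ) hy').eventually_const_lt (by simp [hy₀])
  choose! u hu₁ hu₂ hu using fun (x : X)
    (hx : (‖y x‖ = 1 ∧ ‖y' x‖ = 1 ∧ y x ≠ y' x) ∧ 0 ≤ ⟪y x, y' x⟫) =>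
      h.exists_mem_supporting_planes hx.1.1 hx.1.2.1 hx.1.2.2 hx.2
  have hgood := hyy'.and (hinner.mono fun _ => le_of_lt)
  have hp := h.isSupportMap.tendsto h.isCompact_inner hy₀0 hy
  have hp' := h.isSupportMap.tendsto h.isCompact_inner hy₀0 hy'
  have hzero : Tendsto (fun x => u x - p (y x)) l (𝓝 0) :=
    squeeze_zero_norm' (hgood.mono hu) (by simpa using (hp'.sub hp).norm.const_mul 2)
  exact ⟨u, by simpa using hzero.add hp, hgood.mono fun x hx => ⟨hu₁ x hx, hu₂ x hx⟩⟩

lemma eventually_isPosMultipleOn {M : E3 → E3 ≃ₗ[ℝ] E3}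
    (hM : ∀ y, ‖y‖ = 1 → IsContactConjugation K p a y (M y)) {y₀ : E3} (hy₀ : ‖y₀‖ = 1) :
    ∀ᶠ q : E3 × E3 in 𝓝 y₀ ×ˢ 𝓝 y₀, ‖q.1‖ = 1 → ‖q.2‖ = 1 → q.1 ≠ q.2 →
      IsPosMultipleOn ((supportFunctional p q.1).ker ⊓ (supportFunctional p q.2).ker)
        (contactForm (p q.1) (M q.1)) (contactForm (p q.2) (M q.2)) := by
  have hy₀0 : y₀ ≠ 0 := norm_ne_zero_iff.1 (hy₀ ▸ one_ne_zero)
  suffices hev : ∀ᶠ q : E3 × E3 in 𝓝 y₀ ×ˢ 𝓝 y₀ ⊓ 𝓟 {q | ‖q.1‖ = 1 ∧ ‖q.2‖ = 1 ∧ q.1 ≠ q.2},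
      IsPosMultipleOn ((supportFunctional p q.1).ker ⊓ (supportFunctional p q.2).ker)
        (contactForm (p q.1) (M q.1)) (contactForm (p q.2) (M q.2)) from
    (eventually_inf_principal.1 hev).mono fun q hq h₁ h₂ hne => hq ⟨h₁, h₂, hne⟩
  rw [Filter.Eventually, mem_iff_ultrafilter]
  intro U hU
  have hgood : ∀ᶠ q in (U : Filter (E3 × E3)), ‖q.1‖ = 1 ∧ ‖q.2‖ = 1 ∧ q.1 ≠ q.2 :=
    (hU.trans inf_le_right) (mem_principal_self _)
  have hfst : Tendsto Prod.fst (U : Filter (E3 × E3)) (𝓝 y₀) :=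
    tendsto_fst.mono_left (hU.trans inf_le_left)
  have hsnd : Tendsto Prod.snd (U : Filter (E3 × E3)) (𝓝 y₀) :=
    tendsto_snd.mono_left (hU.trans inf_le_left)
  have hinner : ∀ᶠ q in (U : Filter (E3 × E3)), 0 < ⟪q.1, q.2⟫ :=
    (hfst.inner (𝕜 := ℝ) hsnd).eventually_const_lt (by simp [hy₀])
  choose d hdn hd₁ hd₂ using fun q : E3 × E3 => exists_norm_eq_one_inner_eq_zero q.1 q.2
  have hd0 (q) : d q ≠ 0 := norm_ne_zero_iff.1 ((hdn q).symm ▸ one_ne_zero)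
  obtain ⟨d₀, hd₀, hdU⟩ := (isCompact_sphere (0 : E3) 1).ultrafilter_le_nhds' (U.map d)
    (Filter.mem_map.2 (Eventually.of_forall fun q => mem_sphere_zero_iff_norm.2 (hdn q)))
  rw [mem_sphere_zero_iff_norm] at hd₀
  have hyd₀ : ⟪y₀, d₀⟫ = 0 :=
    tendsto_nhds_unique_of_eventuallyEq (hfst.inner (𝕜 := ℝ) hdU) tendsto_const_nhds
      (Eventually.of_forall hd₁)
  obtain ⟨u, huU, hu⟩ := h.exists_tendsto_mem_supporting_planes hy₀ hfst hsnd hgood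
  filter_upwards [hgood, hinner, hu, huU.eventually_mem (isOpen_interior.mem_nhds
    (h.apply_mem_interior y₀)), h.eventually_one_add_inner_exitPoint_ne_zero hy₀0
      (norm_ne_zero_iff.1 (hd₀ ▸ one_ne_zero)) hyd₀ huU hdU] with q hq hpos ⟨hu₁, hu₂⟩ huK hne
  exact h.isPosMultipleOn_of_exitPoint (hM _ hq.1) (hM _ hq.2.1)
    (linearIndependent_pair_of_inner_pos hq.1 hq.2.1 hq.2.2 hpos) huK hu₁ hu₂ (hd0 q) (hd₁ q)
    (hd₂ q) hne

lemma exists_compatibleForms {M : E3 → E3 ≃ₗ[ℝ] E3}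
    (hM : ∀ y, ‖y‖ = 1 → IsContactConjugation K p a y (M y)) (y₀ : sphere (0 : E3) 1) :
    ∃ N ∈ 𝓝 y₀, CompatibleForms (fun y : sphere (0 : E3) 1 => supportFunctional p y)
      (fun y : sphere (0 : E3) 1 => contactForm (p y) (M y)) N := by
  have hone (y : sphere (0 : E3) 1) : ‖(y : E3)‖ = 1 := mem_sphere_zero_iff_norm.1 y.2
  have hne {y y' : sphere (0 : E3) 1} (hyy' : y ≠ y') : (y : E3) ≠ y' := Subtype.coe_ne_coe.2 hyy'
  obtain ⟨V, hV, hVM⟩ := eventually_prod_self_iff'.1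
    (h.eventually_isPosMultipleOn hM (hone y₀))
  refine ⟨Subtype.val ⁻¹' V,
    continuous_subtype_val.continuousAt.preimage_mem_nhds hV, ?_, ?_, ?_, ?_⟩
  · exact fun y _ => isSymm_contactForm (hM y (hone y)).isPositive.isSymmetric _
  · exact fun i _ j _ k _ hij hik hjk => h.exists_supportFunctional_eq_one (hone i) (hone j)
      (hone k) (hne hij) (hne hik) (hne hjk)
  · exact fun i hi j hj hij => hVM i hi j hj (hone i) (hone j) (hne hij)
  · exact fun i _ j _ k _ hij _ _ => h.exists_contactForm_pos (hM i (hone i)) (hone i) (hone j)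
      (hne hij)

lemma exists_globalForm {M : E3 → E3 ≃ₗ[ℝ] E3}
    (hM : ∀ y, ‖y‖ = 1 → IsContactConjugation K p a y (M y)) :
    ∃ B : LinearMap.BilinForm ℝ (E3 × ℝ), B.IsSymm ∧ ∀ y, ‖y‖ = 1 →
      IsPosMultipleOn (supportFunctional p y).ker B (contactForm (p y) (M y)) := by
  have : ConnectedSpace (sphere (0 : E3) 1) :=
    isConnected_iff_connectedSpace.1 (isConnected_sphere h.one_lt_rank 0 zero_le_one)
  obtain ⟨w, hw, -⟩ := exists_norm_eq_one_inner_eq_zero 0 0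
  let w' : sphere (0 : E3) 1 := ⟨w, mem_sphere_zero_iff_norm.2 hw⟩
  have : Nontrivial (sphere (0 : E3) 1) := ⟨w', -w', ne_neg_of_mem_unit_sphere ℝ w'⟩
  obtain ⟨B, hBs, hB⟩ := exists_isPosMultipleOn_of_locally (h.exists_compatibleForms hM)
  exact ⟨B, hBs, fun y hy => hB ⟨y, mem_sphere_zero_iff_norm.2 hy⟩⟩

end HasPlanarGrazes

end GlobalForm

section Ellipsoid

open LinearMap (BilinForm)

lemma exists_linearEquiv_apply_self_eq_norm_sq {V ι : Type*} [AddCommGroup V] [Module ℝ V]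
    [FiniteDimensional ℝ V] [Fintype ι] (hι : Module.finrank ℝ V = Fintype.card ι)
    {q : BilinForm ℝ V} (hq : q.IsSymm) (hpos : ∀ u ≠ 0, 0 < q u u) :
    ∃ T : EuclideanSpace ℝ ι ≃ₗ[ℝ] V, ∀ x, q (T x) (T x) = ‖x‖ ^ 2 := by
  let core : InnerProductSpace.Core ℝ V :=
    { inner := fun u v => q u v
      conj_inner_symm := fun u v => hq.eq v u
      re_inner_nonneg := fun u => by
        rcases eq_or_ne u 0 with rfl | hu
        · simp
        · exact (hpos u hu).le
      add_left := by simp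
      smul_left := by simp
      definite := fun u hu => by_contra fun hu0 => (hpos u hu0).ne' hu }
  let : NormedAddCommGroup V := core.toNormedAddCommGroup
  let : InnerProductSpace ℝ V := InnerProductSpace.ofCore core.toCore
  let e := ((stdOrthonormalBasis ℝ V).reindex
    (Fintype.equivOfCardEq ((Fintype.card_fin _).trans hι))).repr.symm
  exact ⟨e.toLinearEquiv, fun x => (real_inner_self_eq_norm_sq (e x)).trans (by rw [e.norm_map])⟩

/-- Completing the square. -/
lemma exists_affineEquiv_apply_mk_one_eq {V ι : Type*} [AddCommGroup V] [Module ℝ V]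
    [FiniteDimensional ℝ V] [Fintype ι] (hι : Module.finrank ℝ V = Fintype.card ι)
    {B : BilinForm ℝ (V × ℝ)} (hB : B.IsSymm) (hpos : ∀ u ≠ 0, 0 < B (u, 0) (u, 0)) :
    ∃ (A : EuclideanSpace ℝ ι ≃ᵃ[ℝ] V) (ρ : ℝ), ∀ x, B (A x, 1) (A x, 1) = ‖x‖ ^ 2 - ρ := by
  let q : BilinForm ℝ V := B.compl₁₂ (LinearMap.inl ℝ V ℝ) (LinearMap.inl ℝ V ℝ)
  have hqs : q.IsSymm := ⟨fun u v => hB.eq (u, 0) (v, 0)⟩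
  obtain ⟨T, hT⟩ := exists_linearEquiv_apply_self_eq_norm_sq hι hqs hpos
  have hq : q.Nondegenerate := hqs.isRefl.nondegenerate_iff_separatingLeft.2
    fun u hu => by_contra fun hu0 => (hpos u hu0).ne' (hu u)
  let c : V := (q.toDual hq).symm (-(B (0, 1)).comp (LinearMap.inl ℝ V ℝ))
  have hc (u : V) : B (c, 0) (u, 0) = -B (0, 1) (u, 0) :=
    BilinForm.apply_toDual_symm_apply (hB := hq) _ u
  refine ⟨T.toAffineEquiv.trans (AffineEquiv.constVAdd ℝ V c), -B (c, 1) (c, 1), fun x => ?_⟩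
  have hsum : ((c + T x, 1) : V × ℝ) = (T x, 0) + (c, 1) := by simp [add_comm]
  have hcross : B (c, 1) (T x, 0) = 0 := by
    rw [show ((c, 1) : V × ℝ) = (c, 0) + (0, 1) by simp, map_add, LinearMap.add_apply, hc,
      neg_add_cancel]
  change B (c + T x, 1) (c + T x, 1) = _
  rw [hsum, map_add, map_add, LinearMap.add_apply, LinearMap.add_apply, hcross,
    ← hB.eq (c, 1), hcross, ← hT, sub_neg_eq_add, zero_add, add_zero]
  rfl

lemma subset_of_isPreconnected_of_disjoint_frontier {X : Type*} [TopologicalSpace X] {s C : Set X}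
    (hC : IsClosed C) (hs : IsPreconnected s) (hdisj : Disjoint s (frontier C))
    (hsC : (s ∩ C).Nonempty) : s ⊆ C := by
  have hint (x) (hxs : x ∈ s) (hxC : x ∈ C) : x ∈ interior C :=
    by_contra fun hx => hdisj.le_bot ⟨hxs, subset_closure hxC, hx⟩
  obtain ⟨x, hxs, hxC⟩ := hsC
  refine (hs.subset_of_closure_inter_subset isOpen_interior ⟨x, hxs, hint x hxs hxC⟩ ?_).trans
    interior_subset
  exact fun y hy => hint y hy.2 (closure_minimal interior_subset hC hy.1)

lemma subset_closedBall_of_frontier_subset_sphere {E : Type*} [NormedAddCommGroup E]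
    [InnerProductSpace ℝ E] {C : Set E} {c : E} {r : ℝ} (hr : 0 ≤ r) (hC : IsCompact C)
    (h : frontier C ⊆ sphere c r) : C ⊆ closedBall c r := by
  rcases C.eq_empty_or_nonempty with rfl | hne
  · exact empty_subset _
  obtain ⟨x, hxC, hx⟩ := hC.exists_isMaxOn hne (f := fun x => dist x c) (by fun_prop)
  refine fun x' hx' => mem_closedBall.2 ((hx hx').trans ?_)
  by_contra! hlt
  have hxc : x - c ≠ 0 := norm_ne_zero_iff.1 ((dist_eq_norm x c).symm ▸ (hr.trans_lt hlt).ne')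
  have hint : x ∈ interior C := by_contra fun hx => hlt.ne' (h ⟨subset_closure hxC, hx⟩)
  obtain ⟨w, hwC, hw⟩ := exists_mem_inner_lt_of_mem_interior hint hxc
  have hmax : ‖w - c‖ ≤ ‖x - c‖ := by
    rw [← dist_eq_norm, ← dist_eq_norm]
    exact hx hwC
  refine hw.not_ge ?_
  calc ⟪x - c, w⟫ = ⟪x - c, w - c⟫ + ⟪x - c, c⟫ := by rw [← inner_add_right, sub_add_cancel]
    _ ≤ ‖x - c‖ * ‖x - c‖ + ⟪x - c, c⟫ := by
      gcongr
      exact (real_inner_le_norm _ _).trans (by gcongr)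
    _ = ⟪x - c, x⟫ := by
      rw [← real_inner_self_eq_norm_mul_norm, ← inner_add_right, sub_add_cancel]

lemma eq_closedBall_of_frontier_subset_sphere {E : Type*} [NormedAddCommGroup E]
    [InnerProductSpace ℝ E] [Nontrivial E] {C : Set E} {c : E} {r : ℝ} (hr : 0 ≤ r)
    (hC : IsCompact C) (hi : (interior C).Nonempty) (h : frontier C ⊆ sphere c r) :
    0 < r ∧ C = closedBall c r := by
  have hsub := subset_closedBall_of_frontier_subset_sphere hr hC h
  obtain ⟨x, hx⟩ := hi
  have hxball : x ∈ interior (closedBall c r) := interior_mono hsub hx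
  have hr0 : r ≠ 0 := by
    rintro rfl
    rw [closedBall_zero, interior_singleton] at hxball
    exact hxball
  rw [interior_closedBall c hr0] at hxball
  refine ⟨hr.lt_of_ne' hr0, hsub.antisymm ?_⟩
  rw [← closure_ball c hr0]
  exact closure_minimal (subset_of_isPreconnected_of_disjoint_frontier hC.isClosed
    (convex_ball c r).isPreconnected (sphere_disjoint_ball.symm.mono_right h)
    ⟨x, hxball, interior_subset hx⟩) hC.isClosed

lemma exists_affineEquiv_image_closedBall_eq {E ι : Type*} [NormedAddCommGroup E]
    [NormedSpace ℝ E] [FiniteDimensional ℝ E] [Nontrivial E] [Fintype ι]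
    (hι : Module.finrank ℝ E = Fintype.card ι) {C : Set E} (hC : IsCompact C)
    (hi : (interior C).Nonempty) {B : BilinForm ℝ (E × ℝ)} (hB : B.IsSymm)
    (hpos : ∀ u ≠ 0, 0 < B (u, 0) (u, 0)) (hzero : ∀ x ∈ frontier C, B (x, 1) (x, 1) = 0) :
    ∃ T : EuclideanSpace ℝ ι ≃ᵃ[ℝ] E, C = T '' closedBall 0 1 := by
  obtain ⟨A, ρ, hA⟩ := exists_affineEquiv_apply_mk_one_eq hι hB hpos
  have : Nontrivial (EuclideanSpace ℝ ι) := A.toEquiv.nontrivial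
  let A' : EuclideanSpace ℝ ι ≃ₜ E := A.toContinuousAffineEquiv.toHomeomorph
  have hsphere : frontier (A' ⁻¹' C) ⊆ sphere 0 √ρ := fun x hx => by
    rw [← A'.preimage_frontier] at hx
    rw [mem_sphere_zero_iff_norm, ← Real.sqrt_sq (norm_nonneg x),
      sub_eq_zero.1 ((hA x).symm.trans (hzero _ hx))]
  obtain ⟨hρ, hball⟩ := eq_closedBall_of_frontier_subset_sphere (Real.sqrt_nonneg ρ)
    (A'.isCompact_preimage.2 hC) (A'.preimage_interior C ▸ hi.preimage A'.surjective) hsphere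
  refine ⟨(LinearEquiv.smulOfNeZero ℝ _ √ρ hρ.ne').toAffineEquiv.trans A, ?_⟩
  rw [AffineEquiv.coe_trans, image_comp]
  change C = A' '' ((√ρ • ·) '' closedBall 0 1)
  rw [image_smul, smul_unitClosedBall_of_nonneg hρ.le, ← hball, A'.image_preimage]

end Ellipsoid

section Main

lemma one_lt_rank_E3 : 1 < Module.rank ℝ E3 := by
  rw [← Module.finrank_eq_rank]
  simp

variable {K L : Set E3} {p : E3 → E3}

lemma HasPlanarGrazes.exists_affineEquiv_image_closedBall_eq {a : E3 → E3}
    (h : HasPlanarGrazes K L p a) : ∃ T : E3 ≃ᵃ[ℝ] E3, L = T '' closedBall 0 1 := by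
  choose! M hM using fun y (hy : ‖y‖ = 1) => h.exists_isContactConjugation hy
  obtain ⟨B, hBs, hB⟩ := h.exists_globalForm hM
  refine _root_.exists_affineEquiv_image_closedBall_eq (by simp) h.isCompact_inner
    h.nonempty_interior hBs (fun u hu => ?_) fun x hx => ?_
  · obtain ⟨y, hy, hyu, -⟩ := exists_norm_eq_one_inner_eq_zero u u
    obtain ⟨k, hk, hBk⟩ := hB y hy
    have hker : (u, (0 : ℝ)) ∈ (supportFunctional p y).ker := by
      simpa [supportFunctional_apply, real_inner_comm] using hyu
    rw [hBk _ hker _ hker, contactForm_apply, zero_smul, sub_zero]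
    exact mul_pos hk ((hM y hy).inner_self_pos hu)
  · obtain ⟨y, hy, rfl⟩ := h.isSupportMap.exists_norm_eq_one_apply_eq h.isCompact_inner.isClosed
      h.convex_inner h.nonempty_interior hx
    obtain ⟨k, -, hBk⟩ := hB y hy
    have hker : (p y, (1 : ℝ)) ∈ (supportFunctional p y).ker := by simp [supportFunctional_apply]
    rw [hBk _ hker _ hker, contactForm_apply, one_smul, sub_self, inner_zero_right, mul_zero]

lemma IsSupportMap.apply_mem_graze (hp : IsSupportMap L p) {y z : E3} (hy : y ≠ 0)
    (hyz : ⟪y, z - p y⟫ = 0) : p y ∈ graze L z := by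
  refine ⟨⟨subset_closure ⟨p y, hp.mem y, 1, zero_le_one, by simp⟩, fun hint => ?_⟩,
    hp.apply_mem_frontier hy⟩
  obtain ⟨_, ⟨w, hw, t, ht, rfl⟩, hlt⟩ := exists_mem_inner_lt_of_mem_interior hint hy
  have hle := mul_nonneg ht (hp.inner_sub_nonneg y hw)
  simp only [inner_add_right, inner_sub_right, inner_smul_right] at hlt hle hyz
  rw [sub_eq_zero.1 hyz] at hlt
  linarith

lemma IsSupportMap.exists_inner_eq_one_of_graze_subset (hp : IsSupportMap L p)
    (hLc : IsCompact L) (hLconv : Convex ℝ L) (hLi : (interior L).Nonempty) {z : E3} (hz : z ∉ L)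
    {P : AffineSubspace ℝ E3} (hP : IsPlane P) (hgraze : graze L z ⊆ P) :
    ∃ a, ∀ y ≠ 0, ⟪y, z - p y⟫ = 0 → ⟪a, z - p y⟫ = 1 := by
  have horth : P.directionᗮ ≠ ⊥ := fun h => by
    have hrank := P.direction.finrank_add_finrank_orthogonal
    rw [h, finrank_bot, show Module.finrank ℝ P.direction = 2 from hP, finrank_euclideanSpace,
      Fintype.card_fin] at hrank
    omega
  obtain ⟨ν, hν, hν0⟩ := Submodule.exists_mem_ne_zero_of_ne_bot horth
  obtain ⟨y₀, hy₀, hy₀z, hne⟩ : ∃ y ≠ 0, ⟪y, z - p y⟫ = 0 ∧ ⟪ν, z - p y⟫ ≠ 0 := by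
    by_contra! hzero
    exact hν0 (hp.eq_zero_of_forall_inner_contact_eq_zero one_lt_rank_E3 hLc hLconv hLi hz hzero)
  refine ⟨⟪ν, z - p y₀⟫⁻¹ • ν, fun y hy hyz => ?_⟩
  have hdir : ⟪ν, p y₀ - p y⟫ = 0 := (Submodule.mem_orthogonal' _ _).1 hν _
    (AffineSubspace.vsub_mem_direction (hgraze (hp.apply_mem_graze hy₀ hy₀z))
      (hgraze (hp.apply_mem_graze hy hyz)))
  rw [real_inner_smul_left, ← sub_add_sub_cancel z (p y₀) (p y), inner_add_right, hdir,
    add_zero, inv_mul_cancel₀ hne]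

end Main

theorem statement0_general (K L : Set E3) (Δ : E3 → AffineSubspace ℝ E3)
    (hKcomp : IsCompact K) (hKconv : Convex ℝ K)
    (hLcomp : IsCompact L) (hLint : (interior L).Nonempty)
    (hLstrict : StrictConvex ℝ L) (hLK : L ⊆ interior K)
    (hΔ : ∀ z ∈ frontier K, IsPlane (Δ z) ∧ graze L z ⊆ (Δ z : Set E3)) :
    ∃ T : E3 ≃ᵃ[ℝ] E3, L = T '' closedBall (0 : E3) 1 := by
  obtain ⟨p, hp⟩ := exists_isSupportMap hLcomp hLstrict hLint
  choose! a ha using fun z (hz : z ∈ frontier K) => hp.exists_inner_eq_one_of_graze_subset hLcomp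
    hLstrict.convex hLint (fun hzL => hz.2 (hLK hzL)) (hΔ z hz).1 (hΔ z hz).2
  exact HasPlanarGrazes.exists_affineEquiv_image_closedBall_eq
    ⟨one_lt_rank_E3, hKcomp, hKconv, hLcomp, hLstrict.convex, hLint, hLK, hp, ha⟩

theorem statement0
    (K L : Set E3)
    (hKcomp : IsCompact K) (hKconv : Convex ℝ K) (hKint : (interior K).Nonempty)
    (hKsym : K = -K)
    (hLcomp : IsCompact L) (hLconv : Convex ℝ L) (hLint : (interior L).Nonempty)
    (hLsym : L = -L) (hLstrict : StrictConvex ℝ L)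
    (hLK : L ⊆ interior K)
    (Δ : E3 → AffineSubspace ℝ E3)
    (hΔ : ∀ z ∈ frontier K, IsPlane (Δ z) ∧ graze L z ⊆ (Δ z : Set E3))
    (hAF : AlmostFree K L Δ) :
    ∃ T : E3 ≃ᵃ[ℝ] E3, L = T '' closedBall (0 : E3) 1 := by
  exact statement0_general K L Δ hKcomp hKconv hLcomp hLint hLstrict hLK hΔ

end
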